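/- Let w and m be positive integers with w + m odd. Then V_{w,m} = S_{w,m}. In particular, every multiple zeta value ζ(n_1,…,n_m) of depth m and weight w (i.e. n_i ≥ 1, n_m ≥ 2, n_1+⋯+n_m = w) is a ℚ-linear combination of monomials of weight < w, monomials of depth < m, and products of two monomials of positive weight with total weight ≤ w and total depth ≤ m. -/

import Mathlib

/-- The multiple zeta value `ζ(n_1,…,n_p) = Σ_{0<k_1<⋯<k_p} 1/(k_1^{n_1}⋯k_p^{n_p})`. -/
noncomputable def mzv (p : ℕ) (n : Fin p → ℕ) : ℝ :=
  ∑' k : {k : Fin p → ℕ // StrictMono k ∧ ∀ i, 0 < k i},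
    ∏ i, (((k.1 i : ℝ)) ^ (n i))⁻¹

/-- An index (composition) `(n_1,…,n_{p+1})` for a multiple zeta value. -/
abbrev MZIndex : Type := (p : ℕ) × (Fin (p + 1) → ℕ)

/-- Admissibility: all `n_i ≥ 1` and the last entry is `≥ 2`. -/
def MZIndex.Admissible (z : MZIndex) : Prop :=
  (∀ i, 1 ≤ z.2 i) ∧ 2 ≤ z.2 (Fin.last z.1)

/-- The weight `n_1 + ⋯ + n_{p+1}` of an index. -/
def MZIndex.weight (z : MZIndex) : ℕ := ∑ i, z.2 i

/-- The depth `p + 1` of an index. -/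
def MZIndex.depth (z : MZIndex) : ℕ := z.1 + 1

/-- `x` is a monomial of weight `w'` and depth `m'`: `x = π^{2a}·ζ(s⁽¹⁾)⋯ζ(s⁽ᵏ⁾)` with
admissible indices `s⁽ⁱ⁾`, `w' = 2a + Σ weights`, `m' = Σ depths`. -/
def IsMonomial (x : ℝ) (w' m' : ℕ) : Prop :=
  ∃ (a : ℕ) (zs : List MZIndex), (∀ z ∈ zs, z.Admissible) ∧
    x = Real.pi ^ (2 * a) * (zs.map fun z => mzv (z.1 + 1) z.2).prod ∧
    w' = 2 * a + (zs.map MZIndex.weight).sum ∧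
    m' = (zs.map MZIndex.depth).sum

/-- `V_{w,m}`: the ℚ-span of all monomials of weight `≤ w` and depth `≤ m`. -/
noncomputable def Vspan (w m : ℕ) : Submodule ℚ ℝ :=
  Submodule.span ℚ {x | ∃ w' m', w' ≤ w ∧ m' ≤ m ∧ IsMonomial x w' m'}

/-- `S_{w,m} = V_{w−1,m} + V_{w,m−1} + Σ V_{w₁,m₁}·V_{w₂,m₂}` (sum over `w₁,w₂ ≥ 1`,
`w₁+w₂ ≤ w`, `m₁+m₂ ≤ m`). -/
noncomputable def Sspan (w m : ℕ) : Submodule ℚ ℝ :=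
  Vspan (w - 1) m ⊔ Vspan w (m - 1) ⊔
    ⨆ (w₁ : ℕ) (w₂ : ℕ) (m₁ : ℕ) (m₂ : ℕ) (_ : 1 ≤ w₁) (_ : 1 ≤ w₂)
      (_ : w₁ + w₂ ≤ w) (_ : m₁ + m₂ ≤ m),
      Submodule.span ℚ {x | ∃ y ∈ Vspan w₁ m₁, ∃ z ∈ Vspan w₂ m₂, x = y * z}

open Finset Filter Topology

lemma Vspan_mono {w w' m m' : ℕ} (hw : w ≤ w') (hm : m ≤ m') : Vspan w m ≤ Vspan w' m' :=
  Submodule.span_mono fun _ ⟨a, b, ha, hb, h⟩ => ⟨a, b, ha.trans hw, hb.trans hm, h⟩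

lemma IsMonomial.mul {x y : ℝ} {w m w' m' : ℕ} (hx : IsMonomial x w m) (hy : IsMonomial y w' m') :
    IsMonomial (x * y) (w + w') (m + m') := by
  obtain ⟨a, zs, hz, rfl, rfl, rfl⟩ := hx
  obtain ⟨a', zs', hz', rfl, rfl, rfl⟩ := hy
  refine ⟨a + a', zs ++ zs', ?_, ?_, ?_, ?_⟩
  · intro z hz''
    rcases List.mem_append.1 hz'' with h | h
    exacts [hz z h, hz' z h]
  · simp only [List.map_append, List.prod_append]; ring
  · simp only [List.map_append, List.sum_append]; ring
  · simp only [List.map_append, List.sum_append]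

lemma Vspan_mul_mem {x y : ℝ} {w m w' m' : ℕ} (hx : x ∈ Vspan w m) (hy : y ∈ Vspan w' m') :
    x * y ∈ Vspan (w + w') (m + m') := by
  have h := Submodule.mul_mem_mul hx hy
  rw [Vspan, Vspan, Submodule.span_mul_span] at h
  refine Submodule.span_mono ?_ h
  rintro _ ⟨x, ⟨a, b, ha, hb, hx⟩, y, ⟨a', b', ha', hb', hy⟩, rfl⟩
  exact ⟨a + a', b + b', by omega, by omega, hx.mul hy⟩

lemma pi_pow_mem_Vspan (a : ℕ) : Real.pi ^ (2 * a) ∈ Vspan (2 * a) 0 :=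
  Submodule.subset_span ⟨2 * a, 0, le_rfl, le_rfl, a, [], by simp⟩

lemma one_mem_Vspan (w m : ℕ) : (1 : ℝ) ∈ Vspan w m :=
  Vspan_mono (Nat.zero_le w) (Nat.zero_le m) (by simpa using pi_pow_mem_Vspan 0)

lemma mzv_mem_Vspan (p : ℕ) (n : Fin (p + 1) → ℕ) (hn : ∀ i, 1 ≤ n i) (hl : 2 ≤ n (Fin.last p)) :
    mzv (p + 1) n ∈ Vspan (∑ i, n i) (p + 1) :=
  Submodule.subset_span ⟨_, _, le_rfl, le_rfl, 0, [⟨p, n⟩],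
    by simpa [MZIndex.Admissible] using ⟨hn, hl⟩, by simp, by simp [MZIndex.weight],
    by simp [MZIndex.depth]⟩

/-- The strict truncated nested sum `∑_{0 < k_1 < ⋯ < k_p < N} ∏ k_i ^ (-n_i)`, with the convention
`0⁻¹ = 0` discarding the index zero when all exponents are positive. -/
noncomputable def truncMzv : (p : ℕ) → (Fin p → ℕ) → ℕ → ℝ
  | 0, _, _ => 1
  | p + 1, n, N => ∑ j ∈ range N, ((j : ℝ)⁻¹) ^ n (Fin.last p) * truncMzv p (Fin.init n) j

lemma truncMzv_nonneg (p : ℕ) (n : Fin p → ℕ) (N : ℕ) : 0 ≤ truncMzv p n N := by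
  induction p generalizing N with
  | zero => simp [truncMzv]
  | succ p ih =>
    rw [truncMzv]
    exact sum_nonneg fun j _ => mul_nonneg (by positivity) (ih _ _)

/-- A strictly increasing positive tuple is its last entry together with a strictly increasing
positive tuple bounded by it. -/
def strictMonoTupleEquiv (p : ℕ) (Q : ℕ → Prop) :
    {k : Fin (p + 1) → ℕ // StrictMono k ∧ (∀ i, 0 < k i) ∧ Q (k (Fin.last p))} ≃
      Σ j : {j : ℕ // 0 < j ∧ Q j}, {k : Fin p → ℕ // StrictMono k ∧ (∀ i, 0 < k i) ∧
        ∀ i, k i < j.1} where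
  toFun k := ⟨⟨k.1 (Fin.last p), k.2.2.1 _, k.2.2.2⟩, ⟨Fin.init k.1,
    fun _ _ h => k.2.1 (Fin.castSucc_lt_castSucc_iff.2 h), fun i => k.2.2.1 i.castSucc,
    fun i => k.2.1 (Fin.castSucc_lt_last i)⟩⟩
  invFun x := ⟨Fin.snoc (α := fun _ => ℕ) x.2.1 x.1.1, by
    obtain ⟨⟨j, hj, hQ⟩, k, hk, hpos, hlt⟩ := x
    refine ⟨?_, ?_, by simpa using hQ⟩
    · intro a b hab
      induction b using Fin.lastCases with
      | last =>
        induction a using Fin.lastCases with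
        | last => exact absurd hab (lt_irrefl _)
        | cast a => simpa using hlt a
      | cast b =>
        induction a using Fin.lastCases with
        | last => exact absurd hab (not_lt.2 (Fin.le_last _))
        | cast a => simpa using hk (Fin.castSucc_lt_castSucc_iff.1 hab)
    · intro i
      induction i using Fin.lastCases with
      | last => simpa using hj
      | cast i => simpa using hpos i⟩
  left_inv k := by simp
  right_inv x := by
    obtain ⟨⟨j, hj, hQ⟩, k, hk, hpos, hlt⟩ := x
    refine Sigma.subtype_ext ?_ ?_ <;> simp

open scoped ENNReal in
lemma tsum_tuple_eq (p : ℕ) (Q : ℕ → Prop) [DecidablePred Q] (n : Fin (p + 1) → ℕ)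
    (h1 : 1 ≤ n (Fin.last p))
    (ih : ∀ N : ℕ, ∑' k : {k : Fin p → ℕ // StrictMono k ∧ (∀ i, 0 < k i) ∧ ∀ i, k i < N},
      ENNReal.ofReal (∏ i, ((k.1 i : ℝ) ^ Fin.init n i)⁻¹)
        = ENNReal.ofReal (truncMzv p (Fin.init n) N)) :
    ∑' k : {k : Fin (p + 1) → ℕ // StrictMono k ∧ (∀ i, 0 < k i) ∧ Q (k (Fin.last p))},
      ENNReal.ofReal (∏ i, ((k.1 i : ℝ) ^ n i)⁻¹)
        = ∑' j : ℕ, if Q j then ENNReal.ofReal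
            (((j : ℝ)⁻¹) ^ n (Fin.last p) * truncMzv p (Fin.init n) j) else 0 := by
  rw [← (strictMonoTupleEquiv p Q).symm.tsum_eq, ENNReal.tsum_sigma']
  have key : ∀ j : {j : ℕ // 0 < j ∧ Q j},
      ∑' k : {k : Fin p → ℕ // StrictMono k ∧ (∀ i, 0 < k i) ∧ ∀ i, k i < j.1},
        ENNReal.ofReal (∏ i, ((((strictMonoTupleEquiv p Q).symm ⟨j, k⟩).1 i : ℝ) ^ n i)⁻¹) =
      ENNReal.ofReal (((j.1 : ℝ)⁻¹) ^ n (Fin.last p) * truncMzv p (Fin.init n) j.1) := by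
    intro j
    rw [ENNReal.ofReal_mul (by positivity), ← ih, ← ENNReal.tsum_mul_left]
    refine tsum_congr fun k => ?_
    rw [← ENNReal.ofReal_mul (by positivity), Fin.prod_univ_castSucc, mul_comm]
    simp [strictMonoTupleEquiv, Fin.init]
  simp_rw [key]
  refine (tsum_subtype {j : ℕ | 0 < j ∧ Q j} (fun j : ℕ => ENNReal.ofReal
    (((j : ℝ)⁻¹) ^ n (Fin.last p) * truncMzv p (Fin.init n) j))).trans (tsum_congr fun j => ?_)
  rw [Set.indicator_apply]
  rcases Nat.eq_zero_or_pos j with rfl | hj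
  · simp [zero_pow (by omega : n (Fin.last p) ≠ 0)]
  · simp [hj]

lemma tsum_subtype_congr {α M : Type*} [AddCommMonoid M] [TopologicalSpace M] {P P' : α → Prop}
    (f : α → M) (h : ∀ a, P a ↔ P' a) : ∑' a : {a // P a}, f a = ∑' a : {a // P' a}, f a := by
  obtain rfl : P = P' := funext fun a => propext (h a)
  rfl

lemma tsum_bounded_tuple_eq (p : ℕ) (n : Fin p → ℕ) (hn : ∀ i, 1 ≤ n i) (N : ℕ) :
    ∑' k : {k : Fin p → ℕ // StrictMono k ∧ (∀ i, 0 < k i) ∧ ∀ i, k i < N},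
      ENNReal.ofReal (∏ i, ((k.1 i : ℝ) ^ n i)⁻¹) = ENNReal.ofReal (truncMzv p n N) := by
  induction p generalizing N with
  | zero =>
    have : Unique {k : Fin 0 → ℕ // StrictMono k ∧ (∀ i, 0 < k i) ∧ ∀ i, k i < N} :=
      { default := ⟨Fin.elim0, fun i => i.elim0, fun i => i.elim0, fun i => i.elim0⟩
        uniq := fun k => Subtype.ext (funext fun i => i.elim0) }
    rw [tsum_eq_single default fun b hb => absurd (Subsingleton.elim b _) hb]
    simp [truncMzv]
  | succ p ih =>
    have h := tsum_tuple_eq p (· < N) n (hn _) fun M => ih (Fin.init n) (fun i => hn _) M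
    rw [truncMzv, ENNReal.ofReal_sum_of_nonneg fun j _ =>
      mul_nonneg (by positivity) (truncMzv_nonneg _ _ _)]
    rw [tsum_eq_sum (s := range N) (fun b hb => if_neg (by simpa using hb))] at h
    rw [sum_congr rfl (g := fun j : ℕ => ENNReal.ofReal
      (((j : ℝ)⁻¹) ^ n (Fin.last p) * truncMzv p (Fin.init n) j))
      (by intro j hj; simp [mem_range.1 hj])] at h
    rw [← h]
    refine tsum_subtype_congr (fun k : Fin (p + 1) → ℕ =>
      ENNReal.ofReal (∏ i, ((k i : ℝ) ^ n i)⁻¹)) fun k => ?_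
    exact ⟨fun ⟨a, b, c⟩ => ⟨a, b, c _⟩,
      fun ⟨a, b, c⟩ => ⟨a, b, fun i => (a.monotone (Fin.le_last i)).trans_lt c⟩⟩

lemma mzv_eq_tsum (p : ℕ) (n : Fin (p + 1) → ℕ) (hn : ∀ i, 1 ≤ n i) :
    mzv (p + 1) n = ∑' j : ℕ, ((j : ℝ)⁻¹) ^ n (Fin.last p) * truncMzv p (Fin.init n) j := by
  have h := tsum_tuple_eq p (fun _ => True) n (hn _)
    fun M => tsum_bounded_tuple_eq p (Fin.init n) (fun i => hn _) M
  simp only [if_true] at h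
  have h' := congrArg ENNReal.toReal h
  rw [ENNReal.tsum_toReal_eq (fun _ => ENNReal.ofReal_ne_top),
    ENNReal.tsum_toReal_eq (fun _ => ENNReal.ofReal_ne_top)] at h'
  rw [mzv, tsum_subtype_congr (P' := fun k => StrictMono k ∧ (∀ i, 0 < k i) ∧ True)
    (fun k : Fin (p + 1) → ℕ => ∏ i, ((k i : ℝ) ^ n i)⁻¹) (by simp)]
  convert h' using 3 with k j
  · rw [ENNReal.toReal_ofReal (by positivity)]
  · rw [ENNReal.toReal_ofReal (mul_nonneg (by positivity) (truncMzv_nonneg _ _ _))]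

/-- The `ℚ`-span of the sequences `N ↦ x * N⁻ᵇ * ∑_{0 < k_1 < ⋯ < k_p < N} ∏ k_i ^ (-n_i)` with
`x` in `Vspan`, of total weight at most `w` and total depth at most `m`. -/
noncomputable def Hspan (w m : ℕ) : Submodule ℚ (ℕ → ℝ) :=
  Submodule.span ℚ {f | ∃ w₁ m₁ x b p, ∃ n : Fin p → ℕ, x ∈ Vspan w₁ m₁ ∧ (∀ i, 1 ≤ n i) ∧
    w₁ + b + ∑ i, n i ≤ w ∧ m₁ + p ≤ m ∧
    f = fun N : ℕ => x * ((N : ℝ)⁻¹) ^ b * truncMzv p n N}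

lemma Hspan_mono {w w' m m' : ℕ} (hw : w ≤ w') (hm : m ≤ m') : Hspan w m ≤ Hspan w' m' := by
  refine Submodule.span_mono ?_
  rintro _ ⟨w₁, m₁, x, b, p, n, hx, hn, h1, h2, rfl⟩
  exact ⟨w₁, m₁, x, b, p, n, hx, hn, h1.trans hw, h2.trans hm, rfl⟩

lemma Hspan_truncMzv (p : ℕ) (n : Fin p → ℕ) (hn : ∀ i, 1 ≤ n i) :
    truncMzv p n ∈ Hspan (∑ i, n i) p :=
  Submodule.subset_span ⟨0, 0, 1, 0, p, n, one_mem_Vspan _ _, hn, by omega, by omega, by simp⟩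

lemma Hspan_const {w m : ℕ} {x : ℝ} (hx : x ∈ Vspan w m) : (fun _ => x) ∈ Hspan w m :=
  Submodule.subset_span ⟨w, m, x, 0, 0, Fin.elim0, hx, fun i => i.elim0, by simp, by simp,
    by simp [truncMzv]⟩

lemma Hspan_inv_pow_mul {w m : ℕ} {f : ℕ → ℝ} (a : ℕ) (hf : f ∈ Hspan w m) :
    (fun N : ℕ => ((N : ℝ)⁻¹) ^ a * f N) ∈ Hspan (w + a) m := by
  induction hf using Submodule.span_induction with
  | mem f h =>
    obtain ⟨w₁, m₁, y, b, p, n, hy, hn, h1, h2, rfl⟩ := h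
    exact Submodule.subset_span ⟨w₁, m₁, y, b + a, p, n, hy, hn, by omega, h2, by ext; ring⟩
  | zero => convert (Hspan (w + a) m).zero_mem using 1; ext; simp
  | add f g _ _ hf hg => convert add_mem hf hg using 1; ext; simp [mul_add]
  | smul q f _ hf => convert Submodule.smul_mem _ q hf using 1; ext; simp

lemma Hspan_sum {w m : ℕ} {f : ℕ → ℝ} {a : ℕ} (ha : 1 ≤ a) (hf : f ∈ Hspan w m) :
    (fun N : ℕ => ∑ j ∈ range N, ((j : ℝ)⁻¹) ^ a * f j) ∈ Hspan (w + a) (m + 1) := by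
  induction hf using Submodule.span_induction with
  | mem f h =>
    obtain ⟨w₁, m₁, y, b, p, n, hy, hn, h1, h2, rfl⟩ := h
    refine Submodule.subset_span ⟨w₁, m₁, y, 0, p + 1, Fin.snoc (α := fun _ => ℕ) n (a + b), hy,
      ?_, ?_, by omega, ?_⟩
    · intro i
      induction i using Fin.lastCases with
      | last => simp; omega
      | cast i => simpa using hn i
    · rw [Fin.sum_univ_castSucc]; simp; omega
    · ext N
      simp only [truncMzv, Fin.snoc_last, Fin.init_snoc, mul_sum, pow_zero, mul_one]
      exact sum_congr rfl fun j _ => by ring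
  | zero => convert (Hspan (w + a) (m + 1)).zero_mem using 1; ext; simp
  | add f g _ _ hf hg =>
    convert add_mem hf hg using 1; ext; simp [mul_add, sum_add_distrib]
  | smul q f _ hf =>
    convert Submodule.smul_mem _ q hf using 1; ext; simp [smul_sum]

/-- Sequences growing more slowly than every positive power. -/
def SubpolyGrowth (f : ℕ → ℝ) : Prop :=
  ∀ ε : ℝ, 0 < ε → ∃ C : ℝ, 0 ≤ C ∧ ∀ N : ℕ, 1 ≤ N → |f N| ≤ C * (N : ℝ) ^ ε

lemma SubpolyGrowth.truncMzv (p : ℕ) (n : Fin p → ℕ) (hn : ∀ i, 1 ≤ n i) :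
    SubpolyGrowth (truncMzv p n) := by
  induction p with
  | zero =>
    intro ε hε
    refine ⟨1, zero_le_one, fun N hN => ?_⟩
    simpa [_root_.truncMzv] using Real.one_le_rpow (by exact_mod_cast hN) hε.le
  | succ p ih =>
    intro ε hε
    obtain ⟨C, hC, h⟩ := ih (Fin.init n) (fun i => hn _) (ε / 2) (by positivity)
    have hs : Summable fun j : ℕ => (j : ℝ) ^ (-1 - ε / 2) :=
      Real.summable_nat_rpow.2 (by linarith)
    refine ⟨C * ∑' j : ℕ, (j : ℝ) ^ (-1 - ε / 2), by positivity, fun N hN => ?_⟩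
    rw [_root_.truncMzv, mul_right_comm, ← tsum_mul_left]
    refine (abs_sum_le_sum_abs _ _).trans (le_trans (sum_le_sum fun j hj => ?_)
      ((hs.mul_left (C * (N : ℝ) ^ ε)).sum_le_tsum (range N) fun _ _ => by positivity))
    rcases Nat.eq_zero_or_pos j with rfl | hj0
    · rw [Nat.cast_zero, inv_zero, zero_pow (Nat.one_le_iff_ne_zero.1 (hn _))]
      simp; positivity
    have hj1 : (1 : ℝ) ≤ j := by exact_mod_cast hj0
    have hjN : (j : ℝ) ≤ N := by exact_mod_cast (mem_range.1 hj).le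
    have hj' : (0 : ℝ) < j := by linarith
    rw [abs_mul, abs_of_nonneg (by positivity)]
    calc ((j : ℝ)⁻¹) ^ n (Fin.last p) * |_root_.truncMzv p (Fin.init n) j|
        ≤ (j : ℝ)⁻¹ * (C * (j : ℝ) ^ (ε / 2)) := by
          refine mul_le_mul ?_ (h j hj0) (abs_nonneg _) (by positivity)
          exact pow_le_of_le_one (by positivity) (inv_le_one_of_one_le₀ hj1)
            (Nat.one_le_iff_ne_zero.1 (hn _))
      _ = C * (j : ℝ) ^ ε * (j : ℝ) ^ (-1 - ε / 2) := by
          have : (j : ℝ) ^ ε * (j : ℝ) ^ (-1 - ε / 2) = (j : ℝ)⁻¹ * (j : ℝ) ^ (ε / 2) := by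
            rw [← Real.rpow_neg_one, ← Real.rpow_add hj', ← Real.rpow_add hj']
            ring_nf
          rw [mul_assoc, this]; ring
      _ ≤ C * (N : ℝ) ^ ε * (j : ℝ) ^ (-1 - ε / 2) := by gcongr

lemma SubpolyGrowth.of_mem {w m : ℕ} {f : ℕ → ℝ} (hf : f ∈ Hspan w m) : SubpolyGrowth f := by
  intro ε hε
  induction hf using Submodule.span_induction with
  | mem f h =>
    obtain ⟨w₁, m₁, y, b, p, n, hy, hn, h1, h2, rfl⟩ := h
    obtain ⟨C, hC, h⟩ := SubpolyGrowth.truncMzv p n hn ε hε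
    refine ⟨|y| * C, by positivity, fun N hN => ?_⟩
    rw [abs_mul, abs_mul, mul_assoc, mul_assoc]
    refine mul_le_mul_of_nonneg_left ?_ (abs_nonneg _)
    have hN' : (1 : ℝ) ≤ N := by exact_mod_cast hN
    rw [abs_of_nonneg (by positivity)]
    calc _ ≤ 1 * |_root_.truncMzv p n N| :=
          mul_le_mul_of_nonneg_right
            (pow_le_one₀ (by positivity) (inv_le_one_of_one_le₀ hN')) (abs_nonneg _)
      _ ≤ _ := by simpa using h N hN
  | zero => exact ⟨0, le_rfl, by simp⟩
  | add f g _ _ hf hg =>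
    obtain ⟨C, hC, h⟩ := hf
    obtain ⟨C', hC', h'⟩ := hg
    refine ⟨C + C', by positivity, fun N hN => ?_⟩
    rw [add_mul]
    exact (abs_add_le _ _).trans (add_le_add (h N hN) (h' N hN))
  | smul q f _ hf =>
    obtain ⟨C, hC, h⟩ := hf
    refine ⟨|(q : ℝ)| * C, by positivity, fun N hN => ?_⟩
    rw [Pi.smul_apply, Rat.smul_def, abs_mul, mul_assoc]
    exact mul_le_mul_of_nonneg_left (h N hN) (abs_nonneg _)

lemma SubpolyGrowth.summable_inv_pow_mul {f : ℕ → ℝ} (hf : SubpolyGrowth f) {a : ℕ} (ha : 2 ≤ a) :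
    Summable fun N : ℕ => ((N : ℝ)⁻¹) ^ a * f N := by
  obtain ⟨C, hC, h⟩ := hf (1 / 2) (by norm_num)
  have hs : Summable fun j : ℕ => (j : ℝ) ^ (-(3 / 2) : ℝ) :=
    Real.summable_nat_rpow.2 (by norm_num)
  refine Summable.of_norm_bounded (hs.mul_left C) fun N => ?_
  rcases Nat.eq_zero_or_pos N with rfl | hN
  · simp [zero_pow (by omega : a ≠ 0)]
  have hN' : (1 : ℝ) ≤ N := by exact_mod_cast hN
  rw [Real.norm_eq_abs, abs_mul, abs_of_nonneg (by positivity)]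
  calc ((N : ℝ)⁻¹) ^ a * |f N| ≤ ((N : ℝ)⁻¹) ^ 2 * (C * (N : ℝ) ^ (1 / 2 : ℝ)) :=
        mul_le_mul (pow_le_pow_of_le_one (by positivity) (inv_le_one_of_one_le₀ hN') ha)
          (h N hN) (abs_nonneg _) (by positivity)
    _ = C * (N : ℝ) ^ (-(3 / 2) : ℝ) := by
        have : ((N : ℝ)⁻¹) ^ 2 * (N : ℝ) ^ (1 / 2 : ℝ) = (N : ℝ) ^ (-(3 / 2) : ℝ) := by
          rw [← Real.rpow_natCast, ← Real.rpow_neg_one, ← Real.rpow_mul (by positivity),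
            ← Real.rpow_add (by linarith)]
          norm_num
        rw [← this]; ring

lemma Hspan_tsum_mem {w m : ℕ} {f : ℕ → ℝ} {a : ℕ} (ha : 2 ≤ a) (hf : f ∈ Hspan w m) :
    ∑' N : ℕ, ((N : ℝ)⁻¹) ^ a * f N ∈ Vspan (w + a) (m + 1) := by
  induction hf using Submodule.span_induction with
  | mem f h =>
    obtain ⟨w₁, m₁, y, b, p, n, hy, hn, h1, h2, rfl⟩ := h
    have hn' : ∀ i, 1 ≤ Fin.snoc (α := fun _ => ℕ) n (a + b) i := fun i => by
      induction i using Fin.lastCases with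
      | last => simp; omega
      | cast i => simpa using hn i
    have hz := mzv_mem_Vspan p _ hn' (by simp; omega)
    have := Vspan_mul_mem hy hz
    rw [mzv_eq_tsum p _ hn', ← tsum_mul_left, Fin.sum_univ_castSucc] at this
    simp only [Fin.snoc_last, Fin.init_snoc, Fin.snoc_castSucc] at this
    have h3 := Vspan_mono (w' := w + a) (m' := m + 1) (by omega) (by omega) this
    rw [tsum_congr fun N : ℕ => (by ring : ((N : ℝ)⁻¹) ^ a * (y * ((N : ℝ)⁻¹) ^ b *
      truncMzv p n N) = y * (((N : ℝ)⁻¹) ^ (a + b) * truncMzv p n N))]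
    exact h3
  | zero => simp
  | add f g hf' hg' hf hg =>
    convert add_mem hf hg using 1
    rw [← ((SubpolyGrowth.of_mem hf').summable_inv_pow_mul ha).tsum_add
      ((SubpolyGrowth.of_mem hg').summable_inv_pow_mul ha)]
    simp [mul_add]
  | smul q f hf' hf =>
    convert Submodule.smul_mem _ q hf using 1
    rw [← ((SubpolyGrowth.of_mem hf').summable_inv_pow_mul ha).tsum_const_smul]
    simp

section PartialFractions

/-- The `ℚ`-span of the terms of a partial fraction expansion in `k` at `0` and at `d = D + 1`,
homogeneous of weight `t`, with powers of `d⁻¹` at least `s₁` and `s₂`. -/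
noncomputable def PFspan (s₁ s₂ t : ℕ) : Submodule ℚ (ℤ → ℕ → ℝ) :=
  Submodule.span ℚ {F |
    (∃ s u, 1 ≤ u ∧ s₁ ≤ s ∧ s + u = t ∧
      F = fun (k : ℤ) (D : ℕ) => (((D : ℝ) + 1)⁻¹) ^ s * (((k : ℝ) - ((D : ℝ) + 1))⁻¹) ^ u) ∨
    (∃ s v, 1 ≤ v ∧ s₂ ≤ s ∧ s + v = t ∧
      F = fun (k : ℤ) (D : ℕ) => (((D : ℝ) + 1)⁻¹) ^ s * ((k : ℝ)⁻¹) ^ v) ∨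
    (F = fun (k : ℤ) (D : ℕ) => if k = (D : ℤ) + 1 then (((D : ℝ) + 1)⁻¹) ^ t else 0) ∨
    (F = fun (k : ℤ) (D : ℕ) => if k = 0 then (((D : ℝ) + 1)⁻¹) ^ t else 0)}

lemma PFspan_mono {s₁ s₂ s₁' s₂' t : ℕ} (h₁ : s₁' ≤ s₁) (h₂ : s₂' ≤ s₂) :
    PFspan s₁ s₂ t ≤ PFspan s₁' s₂' t := by
  refine Submodule.span_mono ?_
  rintro F (⟨s, u, hu, hs, ht, rfl⟩ | ⟨s, u, hu, hs, ht, rfl⟩ | rfl | rfl)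
  exacts [Or.inl ⟨s, u, hu, h₁.trans hs, ht, rfl⟩,
    Or.inr (Or.inl ⟨s, u, hu, h₂.trans hs, ht, rfl⟩), Or.inr (Or.inr (Or.inl rfl)),
    Or.inr (Or.inr (Or.inr rfl))]

lemma PFspan_inv_mul {s₁ s₂ t : ℕ} {F : ℤ → ℕ → ℝ} (hF : F ∈ PFspan s₁ s₂ t) :
    (fun (k : ℤ) (D : ℕ) => ((D : ℝ) + 1)⁻¹ * F k D) ∈ PFspan (s₁ + 1) (s₂ + 1) (t + 1) := by
  induction hF using Submodule.span_induction with
  | mem F h =>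
    refine Submodule.subset_span ?_
    rcases h with ⟨s, u, hu, hs, ht, rfl⟩ | ⟨s, u, hu, hs, ht, rfl⟩ | rfl | rfl
    · exact Or.inl ⟨s + 1, u, hu, by omega, by omega, by ext; ring⟩
    · exact Or.inr (Or.inl ⟨s + 1, u, hu, by omega, by omega, by ext; ring⟩)
    · refine Or.inr (Or.inr (Or.inl ?_)); ext; dsimp only; split_ifs <;> ring
    · refine Or.inr (Or.inr (Or.inr ?_)); ext; dsimp only; split_ifs <;> ring
  | zero => convert (PFspan (s₁ + 1) (s₂ + 1) (t + 1)).zero_mem using 1; ext; simp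
  | add f g _ _ hf hg => convert add_mem hf hg using 1; ext; simp [mul_add]
  | smul q f _ hf => convert Submodule.smul_mem _ q hf using 1; ext; simp

/-- The delta correction terms in the partial fraction recursion. -/
lemma PFspan_corr (s₁ s₂ b j : ℕ) :
    (fun (k : ℤ) (D : ℕ) =>
      (if j = 0 then (if k = (D : ℤ) + 1 then (((D : ℝ) + 1)⁻¹) ^ (b + 1 + (j + 1)) else 0) else 0)
      - (if b = 0 then (if k = 0 then ((-1 : ℝ)) ^ (j + 1) *
          (((D : ℝ) + 1)⁻¹) ^ (b + 1 + (j + 1)) else 0) else 0))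
      ∈ PFspan s₁ s₂ (b + 1 + (j + 1)) := by
  refine sub_mem (H := PFspan s₁ s₂ (b + 1 + (j + 1)))
    (x := fun (k : ℤ) (D : ℕ) => if j = 0 then (if k = (D : ℤ) + 1 then
      (((D : ℝ) + 1)⁻¹) ^ (b + 1 + (j + 1)) else 0) else 0)
    (y := fun (k : ℤ) (D : ℕ) => if b = 0 then (if k = 0 then ((-1 : ℝ)) ^ (j + 1) *
          (((D : ℝ) + 1)⁻¹) ^ (b + 1 + (j + 1)) else 0) else 0) ?_ ?_
  · by_cases hj : j = 0
    · simp only [hj, if_true]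
      exact Submodule.subset_span (Or.inr (Or.inr (Or.inl rfl)))
    · simp only [hj, if_false]
      exact (PFspan s₁ s₂ (b + 1 + (j + 1))).zero_mem
  · by_cases hb : b = 0
    · have h : (fun (k : ℤ) (D : ℕ) => if k = 0 then (((D : ℝ) + 1)⁻¹) ^ (b + 1 + (j + 1)) else 0)
          ∈ PFspan s₁ s₂ (b + 1 + (j + 1)) :=
        Submodule.subset_span (Or.inr (Or.inr (Or.inr rfl)))
      convert Submodule.smul_mem _ ((-1 : ℚ) ^ (j + 1)) h using 1
      ext k D
      simp [hb, Rat.smul_def]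
    · simp only [hb, if_false]
      exact (PFspan s₁ s₂ (b + 1 + (j + 1))).zero_mem

lemma partialFraction_rec (b j : ℕ) (k : ℤ) (D : ℕ) :
    ((k : ℝ)⁻¹) ^ (b + 1) * (((k : ℝ) - ((D : ℝ) + 1))⁻¹) ^ (j + 1) =
      ((D : ℝ) + 1)⁻¹ * (((k : ℝ)⁻¹) ^ b * (((k : ℝ) - ((D : ℝ) + 1))⁻¹) ^ (j + 1)) -
      ((D : ℝ) + 1)⁻¹ * (((k : ℝ)⁻¹) ^ (b + 1) * (((k : ℝ) - ((D : ℝ) + 1))⁻¹) ^ j) +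
      ((if j = 0 then (if k = (D : ℤ) + 1 then (((D : ℝ) + 1)⁻¹) ^ (b + 1 + (j + 1)) else 0)
        else 0) -
      (if b = 0 then (if k = 0 then ((-1 : ℝ)) ^ (j + 1) *
          (((D : ℝ) + 1)⁻¹) ^ (b + 1 + (j + 1)) else 0) else 0)) := by
  have hd : (D : ℝ) + 1 ≠ 0 := by positivity
  by_cases hk : k = 0
  · subst hk
    have : ¬ (0 : ℤ) = (D : ℤ) + 1 := by omega
    rcases Nat.eq_zero_or_pos b with rfl | hb
    · simp only [this, if_false, Int.cast_zero, inv_zero, zero_sub, inv_neg]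
      rw [neg_pow ((D : ℝ) + 1)⁻¹ (j + 1)]
      simp [-inv_pow]; ring
    · simp [this, hb.ne', zero_pow hb.ne']
  by_cases hkd : k = (D : ℤ) + 1
  · subst hkd
    have hd' : ¬ (D : ℤ) + 1 = 0 := by omega
    rcases Nat.eq_zero_or_pos j with rfl | hj
    · simp [hd', -inv_pow]; ring
    · simp [hd', hj.ne', zero_pow hj.ne']
  have hk' : (k : ℝ) ≠ 0 := by exact_mod_cast hk
  have hkd' : (k : ℝ) - ((D : ℝ) + 1) ≠ 0 := by
    rw [sub_ne_zero]; exact_mod_cast hkd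
  have e : ((k : ℝ)⁻¹) * ((k : ℝ) - ((D : ℝ) + 1))⁻¹ =
      ((D : ℝ) + 1)⁻¹ * ((k : ℝ) - ((D : ℝ) + 1))⁻¹ - ((D : ℝ) + 1)⁻¹ * (k : ℝ)⁻¹ := by
    field_simp; ring
  simp only [hk, hkd, if_false, ite_self, sub_zero, add_zero]
  rw [pow_succ, pow_succ]
  linear_combination ((k : ℝ)⁻¹) ^ b * (((k : ℝ) - ((D : ℝ) + 1))⁻¹) ^ j * e

lemma PFspan_pow_mul_pow (b j : ℕ) (h : 1 ≤ b + j) :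
    (fun (k : ℤ) (D : ℕ) => ((k : ℝ)⁻¹) ^ b * (((k : ℝ) - ((D : ℝ) + 1))⁻¹) ^ j)
      ∈ PFspan b j (b + j) := by
  induction b generalizing j with
  | zero => exact Submodule.subset_span (Or.inl ⟨0, j, by omega, le_rfl, rfl, by simp⟩)
  | succ b ihb =>
    induction j with
    | zero =>
      exact Submodule.subset_span (Or.inr (Or.inl ⟨0, b + 1, by omega, le_rfl, by omega, by simp⟩))
    | succ j ihj =>
      have h1 := PFspan_mono (s₁' := b + 1) (s₂' := j + 1) le_rfl (by omega)
        (PFspan_inv_mul (ihb (j + 1) (by omega)))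
      have h2 := PFspan_mono (s₁' := b + 1) (s₂' := j + 1) (by omega) le_rfl
        (PFspan_inv_mul (ihj (by omega)))
      rw [show b + (j + 1) + 1 = b + 1 + (j + 1) by omega] at h1
      rw [show b + 1 + j + 1 = b + 1 + (j + 1) by omega] at h2
      convert add_mem (sub_mem h1 h2) (PFspan_corr (b + 1) (j + 1) b j) using 1
      ext k D
      exact partialFraction_rec b j k D

/-- The regularised kernel `(k - d)⁻ʲ - (-d)⁻ʲ` with `d = D + 1`. -/
noncomputable def regKernel (j : ℕ) (k : ℤ) (D : ℕ) : ℝ :=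
  (((k : ℝ) - ((D : ℝ) + 1))⁻¹) ^ j - ((-((D : ℝ) + 1))⁻¹) ^ j

lemma PFspan_pow_mul_regKernel (b j : ℕ) (hb : 1 ≤ b) (hj : 1 ≤ j) :
    (fun (k : ℤ) (D : ℕ) => ((k : ℝ)⁻¹) ^ b * regKernel j k D) ∈ PFspan b 2 (b + j) := by
  obtain ⟨b, rfl⟩ : ∃ b', b = b' + 1 := ⟨b - 1, by omega⟩
  obtain ⟨j, rfl⟩ : ∃ j', j = j' + 1 := ⟨j - 1, by omega⟩
  rcases Nat.eq_zero_or_pos j with rfl | hj'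
  · have h1 := PFspan_inv_mul (PFspan_pow_mul_pow b 1 (by omega))
    convert add_mem h1 (PFspan_corr (b + 1) 2 b 0) using 1
    ext k D
    simp only [regKernel, Pi.add_apply, mul_sub]
    have := partialFraction_rec b 0 k D
    rw [zero_add] at this ⊢
    rw [this]
    simp only [inv_neg]
    ring
  · have h1 := PFspan_mono (s₁' := b + 1) (s₂' := 2) le_rfl (by omega)
      (PFspan_pow_mul_pow (b + 1) (j + 1) (by omega))
    have h2 : (fun (k : ℤ) (D : ℕ) => (((D : ℝ) + 1)⁻¹) ^ (j + 1) * ((k : ℝ)⁻¹) ^ (b + 1))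
        ∈ PFspan (b + 1) 2 (b + 1 + (j + 1)) :=
      Submodule.subset_span (Or.inr (Or.inl ⟨j + 1, b + 1, by omega, by omega, by omega, rfl⟩))
    convert sub_mem h1 (Submodule.smul_mem _ ((-1 : ℚ) ^ (j + 1)) h2) using 1
    ext k D
    simp only [regKernel, Pi.sub_apply, Pi.smul_apply, Rat.smul_def, inv_neg]
    rw [neg_pow ((D : ℝ) + 1)⁻¹ (j + 1)]
    push_cast
    ring

end PartialFractions

section Kernel

lemma abs_inv_sub_le (k : ℤ) (D : ℕ) :
    |((k : ℝ) - ((D : ℝ) + 1))⁻¹| ≤ (2 * |(k : ℝ)| + 1) * ((D : ℝ) + 1)⁻¹ := by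
  have hd : (0 : ℝ) < (D : ℝ) + 1 := by positivity
  by_cases hkd : k = (D : ℤ) + 1
  · subst hkd; simp; positivity
  have h1 : (1 : ℝ) ≤ |(k : ℝ) - ((D : ℝ) + 1)| := by
    have : (1 : ℤ) ≤ |k - ((D : ℤ) + 1)| := Int.one_le_abs (by omega)
    exact_mod_cast this
  have h2 : (D : ℝ) + 1 ≤ |(k : ℝ)| + |(k : ℝ) - ((D : ℝ) + 1)| := by
    have := abs_sub (k : ℝ) ((k : ℝ) - ((D : ℝ) + 1))
    rw [sub_sub_cancel, abs_of_pos hd] at this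
    exact this
  rw [abs_inv, ← div_eq_mul_inv, le_div_iff₀ hd, ← div_eq_inv_mul, div_le_iff₀ (by linarith)]
  nlinarith [abs_nonneg (k : ℝ)]

lemma abs_inv_sub_le_one (k : ℤ) (D : ℕ) : |((k : ℝ) - ((D : ℝ) + 1))⁻¹| ≤ 1 := by
  by_cases hkd : k = (D : ℤ) + 1
  · subst hkd; simp
  rw [abs_inv]
  refine inv_le_one_of_one_le₀ ?_
  have : (1 : ℤ) ≤ |k - ((D : ℤ) + 1)| := Int.one_le_abs (by omega)
  exact_mod_cast this

lemma abs_pow_sub_pow_le_mul {x y : ℝ} (hx : |x| ≤ 1) (hy : |y| ≤ 1) (j : ℕ) :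
    |x ^ j - y ^ j| ≤ j * |x - y| := by
  have h := abs_pow_sub_pow_le x y j
  refine h.trans ?_
  rw [mul_assoc, mul_comm]
  have : max |x| |y| ^ (j - 1) ≤ 1 := pow_le_one₀ (by positivity) (max_le hx hy)
  nlinarith [mul_nonneg (abs_nonneg (x - y)) (Nat.cast_nonneg (α := ℝ) j),
    mul_le_mul_of_nonneg_left this (mul_nonneg (abs_nonneg (x - y)) (Nat.cast_nonneg (α := ℝ) j))]

lemma abs_neg_inv_le_one (D : ℕ) : |(-((D : ℝ) + 1))⁻¹| ≤ 1 := by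
  rw [abs_inv, abs_neg, abs_of_pos (by positivity)]
  exact inv_le_one_of_one_le₀ (by linarith [Nat.cast_nonneg (α := ℝ) D])

lemma abs_regKernel_le_mul (j : ℕ) (k : ℤ) (D : ℕ) :
    |regKernel j k D| ≤ j * |((k : ℝ) - ((D : ℝ) + 1))⁻¹ - (-((D : ℝ) + 1))⁻¹| :=
  abs_pow_sub_pow_le_mul (abs_inv_sub_le_one k D) (abs_neg_inv_le_one D) j

lemma regKernel_zero (j : ℕ) (D : ℕ) : regKernel j 0 D = 0 := by simp [regKernel]

lemma abs_regKernel_le (j : ℕ) (k : ℤ) (D : ℕ) :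
    |regKernel j k D| ≤ j * (|(k : ℝ)| * (2 * |(k : ℝ)| + 1)) * (((D : ℝ) + 1)⁻¹) ^ 2 := by
  have hd : (0 : ℝ) < (D : ℝ) + 1 := by positivity
  refine (abs_regKernel_le_mul j k D).trans ?_
  rw [mul_assoc]
  refine mul_le_mul_of_nonneg_left ?_ (Nat.cast_nonneg j)
  by_cases hkd : k = (D : ℤ) + 1
  · subst hkd
    push_cast
    rw [sub_self, inv_zero, zero_sub, abs_neg, abs_inv, abs_neg, abs_of_pos hd]
    have : ((D : ℝ) + 1)⁻¹ ≤ 1 :=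
      inv_le_one_of_one_le₀ (by linarith [Nat.cast_nonneg (α := ℝ) D])
    have e : ((D : ℝ) + 1) * (2 * ((D : ℝ) + 1) + 1) * (((D : ℝ) + 1)⁻¹) ^ 2 =
      2 + ((D : ℝ) + 1)⁻¹ := by field_simp
    rw [e]; linarith
  · have hkd' : (k : ℝ) - ((D : ℝ) + 1) ≠ 0 := by
      rw [sub_ne_zero]; exact_mod_cast hkd
    have e : ((k : ℝ) - ((D : ℝ) + 1))⁻¹ - (-((D : ℝ) + 1))⁻¹ =
        (k : ℝ) * ((D : ℝ) + 1)⁻¹ * ((k : ℝ) - ((D : ℝ) + 1))⁻¹ := by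
      field_simp; ring
    rw [e, abs_mul, abs_mul, abs_of_pos (inv_pos.2 hd)]
    calc _ ≤ |(k : ℝ)| * ((D : ℝ) + 1)⁻¹ * ((2 * |(k : ℝ)| + 1) * ((D : ℝ) + 1)⁻¹) :=
          mul_le_mul_of_nonneg_left (abs_inv_sub_le k D) (by positivity)
      _ = _ := by ring

lemma SubpolyGrowth.summable_mul {c : ℕ → ℝ} (hc : SubpolyGrowth c) {g : ℕ → ℝ} (A : ℝ)
    (hg : ∀ D, |g D| ≤ A * (((D : ℝ) + 1)⁻¹) ^ 2) : Summable fun D => c (D + 1) * g D := by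
  have h := ((summable_nat_add_iff 1).2 (hc.summable_inv_pow_mul le_rfl)).abs.mul_left A
  refine Summable.of_norm_bounded h fun D => ?_
  rw [Real.norm_eq_abs, abs_mul, abs_mul, abs_of_nonneg (by positivity :
    (0 : ℝ) ≤ (((D + 1 : ℕ) : ℝ)⁻¹) ^ 2)]
  push_cast
  calc _ ≤ |c (D + 1)| * (A * (((D : ℝ) + 1)⁻¹) ^ 2) :=
        mul_le_mul_of_nonneg_left (hg D) (abs_nonneg _)
    _ = _ := by ring

lemma SubpolyGrowth.summable_regKernel {c : ℕ → ℝ} (hc : SubpolyGrowth c) (j : ℕ) (k : ℤ) :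
    Summable fun D => c (D + 1) * regKernel j k D :=
  hc.summable_mul _ (abs_regKernel_le j k)

/-- The function `k ↦ ∑_{d ≥ 1} c_d ((k - d)⁻ʲ - (-d)⁻ʲ)`. -/
noncomputable def kernelSum (j : ℕ) (c : ℕ → ℝ) (k : ℤ) : ℝ :=
  ∑' D : ℕ, c (D + 1) * regKernel j k D

lemma kernelSum_zero (j : ℕ) (c : ℕ → ℝ) : kernelSum j c 0 = 0 := by
  simp [kernelSum, regKernel_zero]

lemma SubpolyGrowth.tendsto_mul_inv {c : ℕ → ℝ} (hc : SubpolyGrowth c) :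
    Tendsto (fun N : ℕ => |c (N + 2)| * ((N : ℝ) + 1)⁻¹) atTop (𝓝 0) := by
  obtain ⟨A, hA, h⟩ := hc (1 / 2) (by norm_num)
  have h1 : Tendsto (fun N : ℕ => 2 * A * ((N + 2 : ℕ) : ℝ) ^ (-(1 / 2) : ℝ)) atTop (𝓝 0) := by
    have := (((tendsto_rpow_neg_atTop (by norm_num : (0 : ℝ) < 1 / 2)).comp
      tendsto_natCast_atTop_atTop).comp (tendsto_add_atTop_nat 2)).const_mul (2 * A)
    simpa using this
  refine squeeze_zero (fun N => by positivity) (fun N => ?_) h1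
  have hN : (0 : ℝ) < ((N + 2 : ℕ) : ℝ) := by positivity
  have e : ((N : ℝ) + 1)⁻¹ ≤ 2 * (((N + 2 : ℕ) : ℝ))⁻¹ := by
    push_cast
    rw [← div_eq_mul_inv, inv_eq_one_div, div_le_div_iff₀ (by positivity) (by positivity)]
    linarith [Nat.cast_nonneg (α := ℝ) N]
  calc |c (N + 2)| * ((N : ℝ) + 1)⁻¹
      ≤ (A * ((N + 2 : ℕ) : ℝ) ^ (1 / 2 : ℝ)) * (2 * (((N + 2 : ℕ) : ℝ))⁻¹) :=
        mul_le_mul (h _ (by omega)) e (by positivity) (by positivity)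
    _ = 2 * A * ((N + 2 : ℕ) : ℝ) ^ (-(1 / 2) : ℝ) := by
        have : ((N + 2 : ℕ) : ℝ) ^ (-(1 / 2) : ℝ) =
            ((N + 2 : ℕ) : ℝ) ^ (1 / 2 : ℝ) * (((N + 2 : ℕ) : ℝ))⁻¹ := by
          rw [← Real.rpow_neg_one, ← Real.rpow_add hN]; norm_num
        rw [this]; ring

lemma kernelSum_add_one_sub {c : ℕ → ℝ} (hc : SubpolyGrowth c) {u : ℕ} (hu : 1 ≤ u) (k : ℤ) {x : ℝ}
    (hx : HasSum (fun D : ℕ => (c (D + 2) - c (D + 1)) * (((k : ℝ) - ((D : ℝ) + 1))⁻¹) ^ u) x) :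
    kernelSum u c (k + 1) - kernelSum u c k = c 1 * ((k : ℝ)⁻¹) ^ u + x := by
  have h1 := (hc.summable_regKernel u (k + 1)).hasSum.sub (hc.summable_regKernel u k).hasSum
  have h2 := (h1.sub hx).tendsto_sum_nat
  set a : ℕ → ℝ := fun D => c (D + 1) * (((k : ℝ) - (D : ℝ))⁻¹) ^ u with ha
  have h3 : ∀ n : ℕ, ∑ D ∈ range n, (c (D + 1) * regKernel u (k + 1) D -
      c (D + 1) * regKernel u k D -
      (c (D + 2) - c (D + 1)) * (((k : ℝ) - ((D : ℝ) + 1))⁻¹) ^ u) = a 0 - a n := by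
    intro n
    rw [← sum_range_sub']
    refine sum_congr rfl fun D _ => ?_
    simp only [ha, regKernel]
    push_cast
    rw [add_sub_add_right_eq_sub]
    ring
  simp only [h3] at h2
  have h4 : Tendsto a atTop (𝓝 0) := by
    rw [← tendsto_add_atTop_iff_nat 1]
    have := hc.tendsto_mul_inv.mul_const (2 * |(k : ℝ)| + 1)
    rw [zero_mul] at this
    refine squeeze_zero_norm (fun N => ?_) this
    rw [Real.norm_eq_abs, ha, abs_mul, abs_pow, mul_assoc]
    refine mul_le_mul_of_nonneg_left ?_ (abs_nonneg _)
    push_cast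
    calc _ ≤ |((k : ℝ) - ((N : ℝ) + 1))⁻¹| :=
          pow_le_of_le_one (abs_nonneg _) (abs_inv_sub_le_one k N) (by omega)
      _ ≤ _ := abs_inv_sub_le k N
      _ = _ := by ring
  have h5 := tendsto_nhds_unique h2 (tendsto_const_nhds.sub h4)
  simp only [ha, Nat.cast_zero, sub_zero, zero_add] at h5
  rw [kernelSum, kernelSum]
  linarith

end Kernel

section StepSum

lemma inv_add_one_le_one (D : ℕ) : ((D : ℝ) + 1)⁻¹ ≤ 1 :=
  inv_le_one_of_one_le₀ (by linarith [Nat.cast_nonneg (α := ℝ) D])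

lemma SubpolyGrowth.summable_mul_pow {c : ℕ → ℝ} (hc : SubpolyGrowth c) {s : ℕ} (hs : 2 ≤ s) :
    Summable fun D : ℕ => c (D + 1) * (((D : ℝ) + 1)⁻¹) ^ s :=
  hc.summable_mul 1 fun D => by
    rw [abs_of_nonneg (by positivity), one_mul]
    exact pow_le_pow_of_le_one (by positivity) (inv_add_one_le_one D) hs

lemma Hspan_tsum_succ_mem {w m : ℕ} {c : ℕ → ℝ} {s : ℕ} (hs : 2 ≤ s) (hc : c ∈ Hspan w m) :
    ∑' D : ℕ, c (D + 1) * (((D : ℝ) + 1)⁻¹) ^ s ∈ Vspan (w + s) (m + 1) := by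
  have h := Hspan_tsum_mem hs hc
  rw [((SubpolyGrowth.of_mem hc).summable_inv_pow_mul hs).tsum_eq_zero_add] at h
  simpa [zero_pow (by omega : s ≠ 0), mul_comm, -inv_pow] using h

/-- The class of functions on `ℤ` generated by constants, by truncated nested sums extended by
zero, and by kernel sums, of weight at most `w` and depth at most `m`. -/
noncomputable def Cspan (w m : ℕ) : Submodule ℚ (ℤ → ℝ) :=
  Submodule.span ℚ {φ |
    (∃ α ∈ Vspan w m, φ = fun _ => α) ∨
    (∃ m₁, ∃ η ∈ Hspan w m₁, m₁ + 1 ≤ m ∧ φ = fun k : ℤ => if 0 < k then η k.toNat else 0) ∨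
    (∃ j w₁ m₁, ∃ c ∈ Hspan w₁ m₁, 1 ≤ j ∧ w₁ + j ≤ w ∧ m₁ + 1 ≤ m ∧ φ = kernelSum j c)}

lemma Cspan_const {w m : ℕ} {α : ℝ} (hα : α ∈ Vspan w m) : (fun _ => α) ∈ Cspan w m :=
  Submodule.subset_span (Or.inl ⟨α, hα, rfl⟩)

lemma Cspan_pos {w w₁ m m₁ : ℕ} {η : ℕ → ℝ} (hη : η ∈ Hspan w₁ m₁) (hw : w₁ ≤ w)
    (hm : m₁ + 1 ≤ m) : (fun k : ℤ => if 0 < k then η k.toNat else 0) ∈ Cspan w m :=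
  Submodule.subset_span (Or.inr (Or.inl ⟨m₁, η, Hspan_mono hw le_rfl hη, hm, rfl⟩))

lemma Cspan_kernelSum {w w₁ m m₁ j : ℕ} {c : ℕ → ℝ} (hc : c ∈ Hspan w₁ m₁) (hj : 1 ≤ j)
    (hw : w₁ + j ≤ w) (hm : m₁ + 1 ≤ m) : kernelSum j c ∈ Cspan w m :=
  Submodule.subset_span (Or.inr (Or.inr ⟨j, w₁, m₁, c, hc, hj, hw, hm, rfl⟩))

/-- `f` has a discrete primitive in `Cspan w m` vanishing at the origin. -/
def HasPrimitive (w m : ℕ) (f : ℤ → ℝ) : Prop :=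
  ∃ Φ ∈ Cspan w m, Φ 0 = 0 ∧ ∀ k, Φ (k + 1) - Φ k = f k

lemma HasPrimitive.zero (w m : ℕ) : HasPrimitive w m fun _ => 0 :=
  ⟨0, zero_mem _, rfl, fun _ => by simp⟩

lemma HasPrimitive.add {w m : ℕ} {f g : ℤ → ℝ} (hf : HasPrimitive w m f)
    (hg : HasPrimitive w m g) : HasPrimitive w m fun k => f k + g k := by
  obtain ⟨Φ, hΦ, h0, h⟩ := hf
  obtain ⟨Ψ, hΨ, h0', h'⟩ := hg
  refine ⟨Φ + Ψ, add_mem hΦ hΨ, by simp [h0, h0'], fun k => ?_⟩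
  simp only [Pi.add_apply, ← h, ← h']; ring

lemma HasPrimitive.smul {w m : ℕ} {f : ℤ → ℝ} (q : ℚ) (hf : HasPrimitive w m f) :
    HasPrimitive w m fun k => q • f k := by
  obtain ⟨Φ, hΦ, h0, h⟩ := hf
  refine ⟨q • Φ, Submodule.smul_mem _ q hΦ, by simp [h0], fun k => ?_⟩
  simp only [Pi.smul_apply, ← h, smul_sub]

lemma HasPrimitive.const_mul_inv_pow {w m w₁ m₁ v : ℕ} {x : ℝ} (hx : x ∈ Vspan w₁ m₁) (hv : 1 ≤ v)
    (hw : w₁ + v ≤ w) (hm : m₁ + 1 ≤ m) : HasPrimitive w m fun k => x * ((k : ℝ)⁻¹) ^ v := by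
  refine ⟨kernelSum v fun _ => x, Cspan_kernelSum (Hspan_const hx) hv hw hm, kernelSum_zero _ _,
    fun k => ?_⟩
  rw [kernelSum_add_one_sub (SubpolyGrowth.of_mem (Hspan_const hx)) hv k (x := 0)
    (by simp), add_zero]

lemma HasPrimitive.pos {w m w₁ m₁ b : ℕ} {η : ℕ → ℝ} (hη : η ∈ Hspan w₁ m₁) (hb : 1 ≤ b)
    (hw : w₁ + b ≤ w) (hm : m₁ + 2 ≤ m) :
    HasPrimitive w m fun k => ((k : ℝ)⁻¹) ^ b * if 0 < k then η k.toNat else 0 := by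
  refine ⟨_, Cspan_pos (Hspan_sum hb hη) hw hm, by simp, fun k => ?_⟩
  rcases lt_trichotomy k 0 with hk | rfl | hk
  · simp [show ¬ 0 < k + 1 by omega, show ¬ 0 < k by omega]
  · simp [zero_pow (by omega : b ≠ 0)]
  · obtain ⟨l, rfl⟩ := Int.eq_ofNat_of_zero_le hk.le
    have e : ((l : ℤ) + 1).toNat = l + 1 := by omega
    simp only [show (0 : ℤ) < (l : ℤ) + 1 by omega, hk, if_true, e, Int.toNat_natCast,
      sum_range_succ, add_sub_cancel_left, Int.cast_natCast]

lemma HasPrimitive.partialFraction {w m w₁ m₁ b t : ℕ} {c : ℕ → ℝ} (hc : c ∈ Hspan w₁ m₁)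
    (hb : 1 ≤ b) (ht : 2 ≤ t) (hw : w₁ + t ≤ w) (hm : m₁ + 2 ≤ m) {F : ℤ → ℕ → ℝ}
    (hF : F ∈ PFspan b 2 t) :
    (∀ k, Summable fun D => c (D + 1) * F k D) ∧
      HasPrimitive w m fun k => ∑' D, c (D + 1) * F k D := by
  have hg := SubpolyGrowth.of_mem hc
  induction hF using Submodule.span_induction with
  | mem F h =>
    rcases h with ⟨s, u, hu, hs, rfl, rfl⟩ | ⟨s, u, hu, hs, rfl, rfl⟩ | rfl | rfl
    · have hsum : ∀ k : ℤ, Summable fun D : ℕ =>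
          c (D + 1) * ((((D : ℝ) + 1)⁻¹) ^ s * (((k : ℝ) - ((D : ℝ) + 1))⁻¹) ^ u) := by
        intro k
        refine hg.summable_mul (2 * |(k : ℝ)| + 1) fun D => ?_
        rw [abs_mul, abs_pow, abs_pow, abs_of_pos (by positivity : (0 : ℝ) < ((D : ℝ) + 1)⁻¹)]
        calc _ ≤ ((D : ℝ) + 1)⁻¹ * ((2 * |(k : ℝ)| + 1) * ((D : ℝ) + 1)⁻¹) := by
              refine mul_le_mul (pow_le_of_le_one (by positivity) (inv_add_one_le_one D)
                (by omega)) ?_ (by positivity) (by positivity)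
              exact (pow_le_of_le_one (abs_nonneg _) (abs_inv_sub_le_one k D)
                (by omega)).trans (abs_inv_sub_le k D)
          _ = _ := by ring
      refine ⟨hsum, ?_⟩
      have hC := Hspan_sum (a := s) (by omega) hc
      refine ⟨_, Cspan_kernelSum hC hu (by omega) (by omega), kernelSum_zero _ _, fun k => ?_⟩
      have := kernelSum_add_one_sub (SubpolyGrowth.of_mem hC) hu k
        (x := ∑' D : ℕ, c (D + 1) *
          ((((D : ℝ) + 1)⁻¹) ^ s * (((k : ℝ) - ((D : ℝ) + 1))⁻¹) ^ u)) (by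
        convert (hsum k).hasSum using 1
        ext D
        rw [sum_range_succ _ (D + 1), add_sub_cancel_left]
        push_cast
        ring)
      rw [this]
      simp [zero_pow (by omega : s ≠ 0)]
    · have hs' := hg.summable_mul_pow hs
      have e : ∀ k : ℤ, (fun D : ℕ => c (D + 1) * ((((D : ℝ) + 1)⁻¹) ^ s * ((k : ℝ)⁻¹) ^ u)) =
          fun D : ℕ => c (D + 1) * (((D : ℝ) + 1)⁻¹) ^ s * ((k : ℝ)⁻¹) ^ u :=
        fun k => by ext; ring
      simp only [e, tsum_mul_right]
      exact ⟨fun k => hs'.mul_right _,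
        HasPrimitive.const_mul_inv_pow (Hspan_tsum_succ_mem hs hc) hu (by omega) (by omega)⟩
    · have hz : ∀ (k : ℤ) (D : ℕ), D ≠ (k - 1).toNat →
          c (D + 1) * (if k = (D : ℤ) + 1 then (((D : ℝ) + 1)⁻¹) ^ t else 0) = 0 := by
        intro k D hD
        rw [if_neg (by omega), mul_zero]
      refine ⟨fun k => summable_of_ne_finset_zero (s := {(k - 1).toNat})
        fun D hD => hz k D (by simpa using hD), ?_⟩
      convert HasPrimitive.pos (w := w) (m := m) hc (by omega : 1 ≤ t) hw hm using 2 with k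
      rw [tsum_eq_single _ (hz k)]
      by_cases hk : 0 < k
      · obtain ⟨l, rfl⟩ : ∃ l : ℕ, k = (l : ℤ) + 1 := ⟨(k - 1).toNat, by omega⟩
        have e : ((l : ℤ) + 1).toNat = l + 1 := by omega
        simp [hk, e, mul_comm]
      · rw [if_neg (by omega), if_neg hk, mul_zero, mul_zero]
    · have hs' := hg.summable_mul_pow ht
      refine ⟨fun k => ?_, fun k : ℤ => if 0 < k then
        (fun _ => ∑' D : ℕ, c (D + 1) * (((D : ℝ) + 1)⁻¹) ^ t) k.toNat else 0,
        Cspan_pos (Hspan_const (Hspan_tsum_succ_mem ht hc)) hw hm, by simp, fun k => ?_⟩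
      · by_cases hk : k = 0
        · simpa [hk, -inv_pow] using hs'
        · simp [hk]
      · rcases lt_trichotomy k 0 with hk | rfl | hk
        · simp [show ¬ 0 < k + 1 by omega, show ¬ 0 < k by omega, hk.ne]
        · simp
        · simp [show 0 < k + 1 by omega, hk, hk.ne']
  | zero => exact ⟨fun k => by simp, by simpa using HasPrimitive.zero w m⟩
  | add F G _ _ hF hG =>
    obtain ⟨hF, hF'⟩ := hF
    obtain ⟨hG, hG'⟩ := hG
    simp only [Pi.add_apply, mul_add]
    refine ⟨fun k => (hF k).add (hG k), ?_⟩
    convert hF'.add hG' using 2 with k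
    exact (hF k).tsum_add (hG k)
  | smul q F _ hF =>
    obtain ⟨hF, hF'⟩ := hF
    simp only [Pi.smul_apply, mul_smul_comm]
    refine ⟨fun k => (hF k).const_smul q, ?_⟩
    convert hF'.smul q using 2 with k
    exact (hF k).tsum_const_smul q

lemma HasPrimitive.of_mem_Cspan {w m b : ℕ} {φ : ℤ → ℝ} (hφ : φ ∈ Cspan w m) (hb : 1 ≤ b) :
    HasPrimitive (w + b) (m + 1) fun k => ((k : ℝ)⁻¹) ^ b * φ k := by
  induction hφ using Submodule.span_induction with
  | mem φ h =>
    rcases h with ⟨α, hα, rfl⟩ | ⟨m₁, η, hη, hm, rfl⟩ | ⟨j, w₁, m₁, c, hc, hj, hw, hm, rfl⟩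
    · simpa only [mul_comm] using HasPrimitive.const_mul_inv_pow hα hb le_rfl le_rfl
    · exact HasPrimitive.pos hη hb le_rfl (by omega)
    · have h := (HasPrimitive.partialFraction (w := w + b) (m := m + 1) hc hb
        (by omega : 2 ≤ b + j) (by omega) (by omega) (PFspan_pow_mul_regKernel b j hb hj)).2
      convert h using 2 with k
      rw [kernelSum, ← tsum_mul_left]
      exact tsum_congr fun D => by ring
  | zero => simpa using HasPrimitive.zero (w + b) (m + 1)
  | add f g _ _ hf hg => simpa only [Pi.add_apply, mul_add] using hf.add hg
  | smul q f _ hf => simpa only [Pi.smul_apply, mul_smul_comm] using hf.smul q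

end StepSum

section SymmetricSums

lemma sum_Icc_neg_shift_sub (g : ℤ → ℝ) (N : ℕ) :
    ∑ k ∈ Icc (-(N : ℤ)) N, g (k - 1) - ∑ k ∈ Icc (-(N : ℤ)) N, g k = g (-(N : ℤ) - 1) - g N := by
  induction N with
  | zero => simp
  | succ N ih =>
    have h1 : Icc (-((N + 1 : ℕ) : ℤ)) ((N + 1 : ℕ) : ℤ) =
        insert (-(N : ℤ) - 1) (insert ((N : ℤ) + 1) (Icc (-(N : ℤ)) N)) := by
      ext k; simp only [mem_insert, mem_Icc]; push_cast; omega
    have h2 : (N : ℤ) + 1 ∉ Icc (-(N : ℤ)) N := by simp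
    have h3 : -(N : ℤ) - 1 ∉ insert ((N : ℤ) + 1) (Icc (-(N : ℤ)) N) := by
      simp only [mem_insert, mem_Icc]; omega
    rw [h1, sum_insert h3, sum_insert h2, sum_insert h3, sum_insert h2]
    push_cast
    rw [add_sub_cancel_right, show -((N : ℤ) + 1) - 1 = -(N : ℤ) - 1 - 1 by ring]
    linear_combination ih

lemma tendsto_sum_Icc_neg_shift {g : ℤ → ℝ} (hg : Tendsto g cofinite (𝓝 0)) {x : ℝ}
    (hx : Tendsto (fun N : ℕ => ∑ k ∈ Icc (-(N : ℤ)) N, g k) atTop (𝓝 x)) (D : ℕ) :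
    Tendsto (fun N : ℕ => ∑ k ∈ Icc (-(N : ℤ)) N, g (k - D)) atTop (𝓝 x) := by
  induction D with
  | zero => simpa using hx
  | succ D ih =>
    have hinj : ∀ e : ℤ, Tendsto (fun k : ℤ => g (k - e)) cofinite (𝓝 0) := fun e =>
      hg.comp (sub_left_injective (b := e)).tendsto_cofinite
    have h1 : Tendsto (fun N : ℕ => g (-(N : ℤ) - 1 - D)) atTop (𝓝 0) := by
      rw [← Nat.cofinite_eq_atTop]
      exact (hinj D).comp (Function.Injective.tendsto_cofinite (f := fun N : ℕ => -(N : ℤ) - 1)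
        fun a b h => by simp only at h; omega)
    have h2 : Tendsto (fun N : ℕ => g ((N : ℤ) - D)) atTop (𝓝 0) := by
      rw [← Nat.cofinite_eq_atTop]
      exact (hinj D).comp Nat.cast_injective.tendsto_cofinite
    have h3 := (h1.sub h2).add ih
    rw [sub_zero, zero_add] at h3
    refine h3.congr fun N => ?_
    have := sum_Icc_neg_shift_sub (fun k => g (k - D)) N
    rw [← this, sub_add_cancel]
    refine sum_congr rfl fun k _ => ?_
    push_cast
    rw [sub_sub, add_comm (1 : ℤ)]

lemma tendsto_inv_pow_cofinite {u : ℕ} (hu : 1 ≤ u) :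
    Tendsto (fun k : ℤ => ((k : ℝ)⁻¹) ^ u) cofinite (𝓝 0) := by
  have h : Tendsto (fun k : ℤ => (k : ℝ)⁻¹) cofinite (𝓝 0) := by
    rw [Int.cofinite_eq, tendsto_sup]
    exact ⟨tendsto_inv_atBot_zero.comp (tendsto_intCast_atBot_iff.2 tendsto_id),
      tendsto_inv_atTop_zero.comp tendsto_intCast_atTop_atTop⟩
  simpa [zero_pow (by omega : u ≠ 0), -inv_pow] using h.pow u

lemma summable_int_inv_pow {v : ℕ} (hv : 2 ≤ v) : Summable fun k : ℤ => ((k : ℝ)⁻¹) ^ v := by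
  simpa using Real.summable_one_div_int_pow.2 (by omega : 1 < v)

/-- The symmetrically summed series `∑_k k⁻ᵛ` over the integers lies in `ℚ πᵛ`, and vanishes for
odd `v`. -/
lemma exists_tendsto_sum_inv_pow {v : ℕ} (hv : 1 ≤ v) :
    ∃ ρ ∈ Vspan v 0,
      Tendsto (fun N : ℕ => ∑ k ∈ Icc (-(N : ℤ)) N, ((k : ℝ)⁻¹) ^ v) atTop (𝓝 ρ) := by
  rcases Nat.even_or_odd v with he | ho
  · obtain ⟨a, rfl⟩ := he.two_dvd
    have hz := hasSum_zeta_nat (k := a) (by omega)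
    have hz' := (hasSum_nat_add_iff' 1).2 hz
    simp only [one_div, ← inv_pow] at hz hz'
    rw [range_one, sum_singleton, Nat.cast_zero, inv_zero, zero_pow (by omega), sub_zero] at hz'
    have hneg : (fun n : ℕ => (((-((n : ℤ) + 1) : ℤ) : ℝ)⁻¹) ^ (2 * a)) =
        fun n : ℕ => (((n + 1 : ℕ) : ℝ)⁻¹) ^ (2 * a) := by
      ext n
      push_cast
      rw [inv_neg, Even.neg_pow ⟨a, by ring⟩]
    have hsum : HasSum (fun k : ℤ => ((k : ℝ)⁻¹) ^ (2 * a)) _ :=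
      HasSum.of_nat_of_neg_add_one (f := fun k : ℤ => ((k : ℝ)⁻¹) ^ (2 * a)) (by simpa using hz)
        (hneg ▸ hz')
    refine ⟨_, ?_, hsum.comp tendsto_Icc_neg⟩
    have := Submodule.smul_mem _ ((-1 : ℚ) ^ (a + 1) * 2 ^ (2 * a - 1) * bernoulli (2 * a) /
      (2 * a).factorial * 2) (pi_pow_mem_Vspan a)
    convert this using 1
    rw [Rat.smul_def]
    push_cast
    ring
  · refine ⟨0, zero_mem _, ?_⟩
    convert tendsto_const_nhds using 2 with N
    have : ∑ k ∈ Icc (-(N : ℤ)) N, ((k : ℝ)⁻¹) ^ v =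
        ∑ k ∈ Icc (-(N : ℤ)) N, -((k : ℝ)⁻¹) ^ v := by
      refine sum_equiv (Equiv.neg ℤ) (fun k => ?_) fun k _ => ?_
      · simp only [mem_Icc, Equiv.neg_apply]; omega
      · rw [Equiv.neg_apply, Int.cast_neg, inv_neg, ho.neg_pow, neg_neg]
    rw [sum_neg_distrib] at this
    linarith

lemma tendsto_sum_Icc_neg_single (a : ℤ) (x : ℝ) :
    Tendsto (fun N : ℕ => ∑ k ∈ Icc (-(N : ℤ)) N, if k = a then x else 0) atTop (𝓝 x) := by
  have h := (hasSum_ite_eq a x).comp (tendsto_Icc_neg (R := ℤ))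
  exact h

/-- Termwise symmetric summation of a partial fraction expansion. -/
lemma exists_tendsto_sum_partialFraction {w₁ m₁ t : ℕ} {c : ℕ → ℝ} (hc : c ∈ Hspan w₁ m₁)
    (ht : 2 ≤ t) {F : ℤ → ℕ → ℝ} (hF : F ∈ PFspan 2 2 t) :
    ∃ ρ : ℕ → ℝ, (∀ D, Tendsto (fun N : ℕ => ∑ k ∈ Icc (-(N : ℤ)) N, F k D) atTop (𝓝 (ρ D))) ∧
      (Summable fun D => c (D + 1) * ρ D) ∧
      ∑' D, c (D + 1) * ρ D ∈ Vspan (w₁ + t) (m₁ + 1) := by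
  have hg := SubpolyGrowth.of_mem hc
  induction hF using Submodule.span_induction with
  | mem F h =>
    rcases h with ⟨s, u, hu, hs, rfl, rfl⟩ | ⟨s, u, hu, hs, rfl, rfl⟩ | rfl | rfl
    · obtain ⟨ρ, hρ, hlim⟩ := exists_tendsto_sum_inv_pow hu
      refine ⟨fun D => (((D : ℝ) + 1)⁻¹) ^ s * ρ, fun D => ?_, ?_, ?_⟩
      · simp only [← mul_sum]
        refine Tendsto.const_mul _ ?_
        convert tendsto_sum_Icc_neg_shift (tendsto_inv_pow_cofinite hu) hlim (D + 1) using 5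
        push_cast; rfl
      · simpa only [← mul_assoc] using (hg.summable_mul_pow hs).mul_right ρ
      · simp only [← mul_assoc, tsum_mul_right]
        exact Vspan_mono (by omega) (by omega) (Vspan_mul_mem (Hspan_tsum_succ_mem hs hc) hρ)
    · obtain ⟨ρ, hρ, hlim⟩ := exists_tendsto_sum_inv_pow hu
      refine ⟨fun D => (((D : ℝ) + 1)⁻¹) ^ s * ρ, fun D => ?_, ?_, ?_⟩
      · simp only [← mul_sum]
        exact hlim.const_mul _
      · simpa only [← mul_assoc] using (hg.summable_mul_pow hs).mul_right ρ
      · simp only [← mul_assoc, tsum_mul_right]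
        exact Vspan_mono (by omega) (by omega) (Vspan_mul_mem (Hspan_tsum_succ_mem hs hc) hρ)
    · exact ⟨fun D => (((D : ℝ) + 1)⁻¹) ^ t, fun D => tendsto_sum_Icc_neg_single _ _,
        hg.summable_mul_pow ht, Hspan_tsum_succ_mem ht hc⟩
    · exact ⟨fun D => (((D : ℝ) + 1)⁻¹) ^ t, fun D => tendsto_sum_Icc_neg_single _ _,
        hg.summable_mul_pow ht, Hspan_tsum_succ_mem ht hc⟩
  | zero => exact ⟨0, fun D => by simp, by simp, by simp⟩
  | add F G _ _ hF hG =>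
    obtain ⟨ρ, h1, h2, h3⟩ := hF
    obtain ⟨σ, h1', h2', h3'⟩ := hG
    refine ⟨ρ + σ, fun D => ?_, ?_, ?_⟩
    · simpa only [Pi.add_apply, sum_add_distrib] using (h1 D).add (h1' D)
    · simpa only [Pi.add_apply, mul_add] using h2.add h2'
    · simp only [Pi.add_apply, mul_add]
      rw [h2.tsum_add h2']
      exact add_mem h3 h3'
  | smul q F _ hF =>
    obtain ⟨ρ, h1, h2, h3⟩ := hF
    refine ⟨q • ρ, fun D => ?_, ?_, ?_⟩
    · simpa only [Pi.smul_apply, ← smul_sum] using (h1 D).const_smul q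
    · simpa only [Pi.smul_apply, mul_smul_comm] using h2.const_smul q
    · simp only [Pi.smul_apply, mul_smul_comm]
      rw [h2.tsum_const_smul]
      exact Submodule.smul_mem _ q h3

end SymmetricSums

section IntegerSums

lemma abs_inv_pow_mul_regKernel_le {b j : ℕ} (hb : 2 ≤ b) (hj : 1 ≤ j) (k : ℤ) (D : ℕ) :
    |((k : ℝ)⁻¹) ^ b * regKernel j k D| ≤ j * (((D : ℝ) + 1) ^ (-(5 / 4) : ℝ) *
      (|(k : ℝ)| ^ (-(3 / 2) : ℝ) + |((k - ((D : ℤ) + 1) : ℤ) : ℝ)| ^ (-(3 / 2) : ℝ))) := by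
  have hd : (1 : ℝ) ≤ (D : ℝ) + 1 := by linarith [Nat.cast_nonneg (α := ℝ) D]
  have hd0 : (0 : ℝ) < (D : ℝ) + 1 := by linarith
  by_cases hk : k = 0
  · subst hk
    rw [regKernel_zero, mul_zero, abs_zero]; positivity
  have hk1 : (1 : ℝ) ≤ |(k : ℝ)| := by exact_mod_cast Int.one_le_abs hk
  have hk0 : (0 : ℝ) < |(k : ℝ)| := by linarith
  have hpow : |((k : ℝ)⁻¹) ^ b| ≤ (|(k : ℝ)|⁻¹) ^ 2 := by
    rw [abs_pow, abs_inv]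
    exact pow_le_pow_of_le_one (by positivity) (inv_le_one_of_one_le₀ hk1) hb
  rw [abs_mul]
  refine (mul_le_mul hpow (abs_regKernel_le_mul j k D) (abs_nonneg _) (by positivity)).trans ?_
  rw [mul_left_comm]
  refine mul_le_mul_of_nonneg_left ?_ (Nat.cast_nonneg j)
  by_cases hkd : k = (D : ℤ) + 1
  · subst hkd
    push_cast
    rw [sub_self, inv_zero, zero_sub, abs_neg, abs_inv, abs_neg, abs_of_pos hd0, abs_zero,
      Real.zero_rpow (by norm_num), add_zero, ← Real.rpow_add hd0, ← pow_succ,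
      ← Real.rpow_neg_one, ← Real.rpow_mul_natCast hd0.le]
    exact Real.rpow_le_rpow_of_exponent_le hd (by norm_num)
  have hkd' : (k : ℝ) - ((D : ℝ) + 1) ≠ 0 := by
    rw [sub_ne_zero]; exact_mod_cast hkd
  have e : ((k : ℝ) - ((D : ℝ) + 1))⁻¹ - (-((D : ℝ) + 1))⁻¹ =
      (k : ℝ) * ((D : ℝ) + 1)⁻¹ * ((k : ℝ) - ((D : ℝ) + 1))⁻¹ := by
    field_simp; ring
  have hl1 : (1 : ℝ) ≤ |(k : ℝ) - ((D : ℝ) + 1)| := by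
    have : (1 : ℤ) ≤ |k - ((D : ℤ) + 1)| := Int.one_le_abs (by omega)
    exact_mod_cast this
  have htri : (D : ℝ) + 1 ≤ |(k : ℝ)| + |(k : ℝ) - ((D : ℝ) + 1)| := by
    have := abs_sub (k : ℝ) ((k : ℝ) - ((D : ℝ) + 1))
    rwa [sub_sub_cancel, abs_of_pos hd0] at this
  rw [e, abs_mul, abs_mul, abs_of_pos (inv_pos.2 hd0), abs_inv]
  push_cast
  set x := |(k : ℝ)|
  set y := |(k : ℝ) - ((D : ℝ) + 1)|
  set d := (D : ℝ) + 1
  have hy0 : 0 < y := by linarith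
  have hxy : d / 2 ≤ x * y := by nlinarith
  have h1 : (x * y) ^ (-(1 / 4) : ℝ) ≤ 2 * d ^ (-(1 / 4) : ℝ) := by
    calc (x * y) ^ (-(1 / 4) : ℝ) ≤ (d / 2) ^ (-(1 / 4) : ℝ) :=
          Real.rpow_le_rpow_of_nonpos (by positivity) hxy (by norm_num)
      _ = (2 : ℝ) ^ (1 / 4 : ℝ) * d ^ (-(1 / 4) : ℝ) := by
          rw [Real.div_rpow hd0.le (by norm_num), Real.rpow_neg (by norm_num : (0 : ℝ) ≤ 2),
            div_inv_eq_mul, mul_comm]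
      _ ≤ _ := by
          refine mul_le_mul_of_nonneg_right ?_ (by positivity)
          calc (2 : ℝ) ^ (1 / 4 : ℝ) ≤ 2 ^ (1 : ℝ) :=
                Real.rpow_le_rpow_of_exponent_le (by norm_num) (by norm_num)
            _ = 2 := Real.rpow_one 2
  have h2 : (x * y) ^ (-(3 / 4) : ℝ) ≤ (x ^ (-(3 / 2) : ℝ) + y ^ (-(3 / 2) : ℝ)) / 2 := by
    have ex : x ^ (-(3 / 2) : ℝ) = (x ^ (-(3 / 4) : ℝ)) ^ 2 := by
      rw [← Real.rpow_mul_natCast hk0.le]; norm_num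
    have ey : y ^ (-(3 / 2) : ℝ) = (y ^ (-(3 / 4) : ℝ)) ^ 2 := by
      rw [← Real.rpow_mul_natCast hy0.le]; norm_num
    rw [Real.mul_rpow hk0.le hy0.le, ex, ey]
    nlinarith [sq_nonneg (x ^ (-(3 / 4) : ℝ) - y ^ (-(3 / 4) : ℝ))]
  have h3 : (x * y)⁻¹ ≤ d ^ (-(1 / 4) : ℝ) * (x ^ (-(3 / 2) : ℝ) + y ^ (-(3 / 2) : ℝ)) := by
    have : (x * y)⁻¹ = (x * y) ^ (-(1 / 4) : ℝ) * (x * y) ^ (-(3 / 4) : ℝ) := by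
      rw [← Real.rpow_add (by positivity), ← Real.rpow_neg_one]; norm_num
    rw [this]
    calc _ ≤ 2 * d ^ (-(1 / 4) : ℝ) * ((x ^ (-(3 / 2) : ℝ) + y ^ (-(3 / 2) : ℝ)) / 2) :=
          mul_le_mul h1 h2 (by positivity) (by positivity)
      _ = _ := by ring
  have h4 : d ^ (-(5 / 4) : ℝ) = d⁻¹ * d ^ (-(1 / 4) : ℝ) := by
    rw [← Real.rpow_neg_one, ← Real.rpow_add hd0]; norm_num
  calc x⁻¹ ^ 2 * (x * d⁻¹ * y⁻¹) = d⁻¹ * (x * y)⁻¹ := by field_simp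
    _ ≤ d⁻¹ * (d ^ (-(1 / 4) : ℝ) * (x ^ (-(3 / 2) : ℝ) + y ^ (-(3 / 2) : ℝ))) :=
        mul_le_mul_of_nonneg_left h3 (by positivity)
    _ = _ := by rw [h4]; ring

/-- The shear `(k, D) ↦ (k - (D + 1), D)`. -/
def shearEquiv : ℤ × ℕ ≃ ℤ × ℕ where
  toFun p := (p.1 - ((p.2 : ℤ) + 1), p.2)
  invFun p := (p.1 + ((p.2 : ℤ) + 1), p.2)
  left_inv p := by simp
  right_inv p := by simp

lemma SubpolyGrowth.summable_prod {c : ℕ → ℝ} (hc : SubpolyGrowth c) {b j : ℕ} (hb : 2 ≤ b)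
    (hj : 1 ≤ j) :
    Summable fun p : ℤ × ℕ => c (p.2 + 1) * (((p.1 : ℝ)⁻¹) ^ b * regKernel j p.1 p.2) := by
  have h1 : Summable fun D : ℕ => |c (D + 1)| * ((D : ℝ) + 1) ^ (-(5 / 4) : ℝ) := by
    obtain ⟨A, hA, h⟩ := hc (1 / 8) (by norm_num)
    have hs := ((summable_nat_add_iff 1).2 (Real.summable_nat_rpow.2
      (by norm_num : (-(9 / 8) : ℝ) < -1))).mul_left A
    refine Summable.of_nonneg_of_le (fun D => by positivity) (fun D => ?_) hs
    have hd : (0 : ℝ) < (D : ℝ) + 1 := by positivity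
    have := h (D + 1) (by omega)
    push_cast at this ⊢
    calc _ ≤ A * ((D : ℝ) + 1) ^ (1 / 8 : ℝ) * ((D : ℝ) + 1) ^ (-(5 / 4) : ℝ) :=
          mul_le_mul_of_nonneg_right this (by positivity)
      _ = _ := by rw [mul_assoc, ← Real.rpow_add hd]; norm_num
  have h2 := (Real.summable_abs_int_rpow (by norm_num : (1 : ℝ) < 3 / 2)).mul_of_nonneg h1
    (fun k => by positivity) (fun D => by positivity)
  have h3 := (shearEquiv.summable_iff.2 h2)
  refine Summable.of_norm_bounded ((h2.add h3).mul_left (j : ℝ)) fun p => ?_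
  rw [Real.norm_eq_abs, abs_mul]
  refine (mul_le_mul_of_nonneg_left (abs_inv_pow_mul_regKernel_le hb hj p.1 p.2)
    (abs_nonneg _)).trans (le_of_eq ?_)
  simp only [shearEquiv, Function.comp, Equiv.coe_fn_mk]
  ring

lemma tsum_eq_of_tendsto_sum_Icc_neg {f : ℤ → ℝ} (hf : Summable f) {x : ℝ}
    (hx : Tendsto (fun N : ℕ => ∑ k ∈ Icc (-(N : ℤ)) N, f k) atTop (𝓝 x)) : ∑' k, f k = x :=
  tendsto_nhds_unique (hf.hasSum.comp (tendsto_Icc_neg (R := ℤ))) hx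

lemma Cspan_tsum_mem {w m b : ℕ} {φ : ℤ → ℝ} (hφ : φ ∈ Cspan w m) (hb : 2 ≤ b) :
    (Summable fun k : ℤ => ((k : ℝ)⁻¹) ^ b * φ k) ∧
      ∑' k : ℤ, ((k : ℝ)⁻¹) ^ b * φ k ∈ Vspan (w + b) m := by
  induction hφ using Submodule.span_induction with
  | mem φ h =>
    rcases h with ⟨α, hα, rfl⟩ | ⟨m₁, η, hη, hm, rfl⟩ | ⟨j, w₁, m₁, c, hc, hj, hw, hm, rfl⟩
    · have hs := summable_int_inv_pow hb
      refine ⟨hs.mul_right α, ?_⟩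
      obtain ⟨ρ, hρ, hlim⟩ := exists_tendsto_sum_inv_pow (v := b) (by omega)
      have hsum := tsum_eq_of_tendsto_sum_Icc_neg (hs.mul_right α)
        (by simpa only [← sum_mul] using hlim.mul_const α)
      have hmem := Vspan_mul_mem hα hρ
      rw [mul_comm α ρ, add_zero, ← hsum] at hmem
      exact hmem
    · have hs := ((SubpolyGrowth.of_mem hη).summable_inv_pow_mul hb).hasSum
      have h1 : HasSum (fun N : ℕ => (((N : ℤ) : ℝ)⁻¹) ^ b * if 0 < (N : ℤ) then η (N : ℤ).toNat
          else 0) (∑' N : ℕ, ((N : ℝ)⁻¹) ^ b * η N) := by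
        refine hs.congr_fun fun N => ?_
        rcases Nat.eq_zero_or_pos N with rfl | hN
        · simp [zero_pow (by omega : b ≠ 0)]
        · simp [hN]
      have h2 : HasSum (fun N : ℕ => (((-((N : ℤ) + 1) : ℤ) : ℝ)⁻¹) ^ b *
          if 0 < -((N : ℤ) + 1) then η (-((N : ℤ) + 1)).toNat else 0) 0 := by
        refine hasSum_zero.congr_fun fun N => ?_
        rw [if_neg (by omega), mul_zero]
      have h := HasSum.of_nat_of_neg_add_one
        (f := fun k : ℤ => ((k : ℝ)⁻¹) ^ b * if 0 < k then η k.toNat else 0) h1 h2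
      refine ⟨h.summable, ?_⟩
      rw [h.tsum_eq, add_zero]
      exact Vspan_mono le_rfl hm (Hspan_tsum_mem hb hη)
    · have hs := (SubpolyGrowth.of_mem hc).summable_prod hb hj
      have e : ∀ k : ℤ, ((k : ℝ)⁻¹) ^ b * kernelSum j c k =
          ∑' D : ℕ, c (D + 1) * (((k : ℝ)⁻¹) ^ b * regKernel j k D) := fun k => by
        rw [kernelSum, ← tsum_mul_left]
        exact tsum_congr fun D => by ring
      simp only [e]
      refine ⟨hs.prod, ?_⟩
      obtain ⟨ρ, h1, -, h3⟩ := exists_tendsto_sum_partialFraction hc (by omega : 2 ≤ b + j)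
        (PFspan_mono hb le_rfl (PFspan_pow_mul_regKernel b j (by omega) hj))
      rw [← Summable.tsum_comm (f := fun (k : ℤ) (D : ℕ) =>
        c (D + 1) * (((k : ℝ)⁻¹) ^ b * regKernel j k D)) hs]
      have hD : ∀ D : ℕ, ∑' k : ℤ, c (D + 1) * (((k : ℝ)⁻¹) ^ b * regKernel j k D) =
          c (D + 1) * ρ D := fun D => by
        refine tsum_eq_of_tendsto_sum_Icc_neg (hs.prod_symm.prod_factor D) ?_
        refine ((h1 D).const_mul (c (D + 1))).congr fun N => ?_
        simp [mul_sum]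
      simp only [hD]
      exact Vspan_mono (by omega) hm h3
  | zero => simp
  | add f g _ _ hf hg =>
    simp only [Pi.add_apply, mul_add]
    exact ⟨hf.1.add hg.1, by rw [hf.1.tsum_add hg.1]; exact add_mem hf.2 hg.2⟩
  | smul q f _ hf =>
    simp only [Pi.smul_apply, mul_smul_comm]
    exact ⟨hf.1.const_smul q, by rw [hf.1.tsum_const_smul]; exact Submodule.smul_mem _ q hf.2⟩

end IntegerSums

section ParityTheorem

/-- Truncated nested sums extend to functions on `ℤ` in `Cspan` which, up to sign and terms of lower
depth, are even. -/
lemma exists_extension (p : ℕ) (n : Fin p → ℕ) (hn : ∀ i, 1 ≤ n i) :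
    ∃ Φ ∈ Cspan (∑ i, n i) p, ∃ e ∈ Hspan (∑ i, n i) (p - 1), (p = 0 → e = 0) ∧
      ∀ k : ℕ, Φ k = truncMzv p n k ∧
        Φ (-(k : ℤ)) = (-1) ^ (∑ i, n i + p) * (truncMzv p n k + e k) := by
  induction p with
  | zero =>
    exact ⟨fun _ => 1, Cspan_const (one_mem_Vspan _ _), 0, zero_mem _, fun _ => rfl,
      fun k => by simp [truncMzv]⟩
  | succ p ih =>
    obtain ⟨φ, hφ, e, he, he0, h⟩ := ih (Fin.init n) fun i => hn _
    have hw : ∑ i, n i = ∑ i, Fin.init n i + n (Fin.last p) := Fin.sum_univ_castSucc _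
    have hb := hn (Fin.last p)
    set b := n (Fin.last p) with hbdef
    obtain ⟨Φ, hΦ, h0, hΔ⟩ := HasPrimitive.of_mem_Cspan hφ hb
    beta_reduce at hΔ
    rw [hw]
    refine ⟨Φ, hΦ, (fun N : ℕ => ((N : ℝ)⁻¹) ^ b * (truncMzv p (Fin.init n) + e) N) +
      fun N : ℕ => ∑ j ∈ range N, ((j : ℝ)⁻¹) ^ b * e j, add_mem ?_ ?_, by simp, ?_⟩
    · refine Hspan_inv_pow_mul b (add_mem ?_ ?_)
      · exact Hspan_truncMzv p _ fun i => hn _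
      · exact Hspan_mono le_rfl (by omega) he
    · rcases Nat.eq_zero_or_pos p with rfl | hp
      · rw [he0 rfl]
        convert zero_mem (Hspan _ _) using 1
        ext; simp
      · exact Hspan_mono le_rfl (by omega) (Hspan_sum hb he)
    · intro k
      induction k with
      | zero => simp [h0, truncMzv, zero_pow (by omega : b ≠ 0)]
      | succ k ihk =>
        obtain ⟨ih1, ih2⟩ := ihk
        constructor
        · have := hΔ k
          rw [Int.cast_natCast, (h k).1, ih1] at this
          rw [Nat.cast_succ, truncMzv, sum_range_succ, ← hbdef]
          rw [truncMzv, ← hbdef] at this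
          linarith
        · have := hΔ (-((k + 1 : ℕ) : ℤ))
          rw [(h (k + 1)).2, show -((k + 1 : ℕ) : ℤ) + 1 = -(k : ℤ) by push_cast; ring, ih2,
            Int.cast_neg, Int.cast_natCast, inv_neg, neg_pow] at this
          rw [← sub_eq_iff_eq_add'.2 (sub_eq_iff_eq_add.1 this)]
          simp only [Pi.add_apply, truncMzv, sum_range_succ, ← hbdef]
          ring

lemma mzv_mem_Vspan_of_odd (p : ℕ) (n : Fin (p + 1) → ℕ) (hn : ∀ i, 1 ≤ n i)
    (hl : 2 ≤ n (Fin.last p)) (hodd : Odd (∑ i, n i + (p + 1))) :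
    mzv (p + 1) n ∈ Vspan (∑ i, n i) p := by
  have hn' : ∀ i, 1 ≤ Fin.init n i := fun i => hn _
  have hw : ∑ i, n i = ∑ i, Fin.init n i + n (Fin.last p) := Fin.sum_univ_castSucc _
  rw [mzv_eq_tsum p n hn]
  rw [hw] at hodd ⊢
  set b := n (Fin.last p)
  set T := truncMzv p (Fin.init n)
  obtain ⟨φ, hφ, e, he, he0, h⟩ := exists_extension p (Fin.init n) hn'
  obtain ⟨hs, hA⟩ := Cspan_tsum_mem hφ hl
  have hT := (SubpolyGrowth.truncMzv p _ hn').summable_inv_pow_mul hl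
  have he' := (SubpolyGrowth.of_mem he).summable_inv_pow_mul hl
  have hE : ∑' N : ℕ, ((N : ℝ)⁻¹) ^ b * e N ∈ Vspan (∑ i, Fin.init n i + b) p := by
    rcases Nat.eq_zero_or_pos p with hp | hp
    · simp [he0 hp]
    · exact Vspan_mono le_rfl (by omega) (Hspan_tsum_mem hl he)
  have hpos : HasSum (fun N : ℕ => (((N : ℤ) : ℝ)⁻¹) ^ b * φ N)
      (∑' N : ℕ, ((N : ℝ)⁻¹) ^ b * T N) :=
    hT.hasSum.congr_fun fun N => by rw [(h N).1, Int.cast_natCast]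
  have hneg : HasSum (fun N : ℕ => (((-((N : ℤ) + 1) : ℤ) : ℝ)⁻¹) ^ b * φ (-((N : ℤ) + 1)))
      (∑' N : ℕ, ((N : ℝ)⁻¹) ^ b * T N + ∑' N : ℕ, ((N : ℝ)⁻¹) ^ b * e N) := by
    have := (hasSum_nat_add_iff' 1).2 (hT.hasSum.add he'.hasSum)
    rw [range_one, sum_singleton, Nat.cast_zero, inv_zero, zero_pow (by omega), zero_mul,
      zero_mul, add_zero, sub_zero] at this
    refine this.congr_fun fun N => ?_
    have h2 := (h (N + 1)).2
    rw [Nat.cast_succ] at h2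
    have hsign : (-1 : ℝ) ^ b * (-1) ^ (∑ i, Fin.init n i + p) = 1 := by
      rw [← pow_add]
      refine Even.neg_one_pow ?_
      rw [Nat.odd_iff] at hodd
      rw [Nat.even_iff]
      omega
    rw [h2, Int.cast_neg, inv_neg, neg_pow]
    push_cast
    linear_combination (((N : ℝ) + 1)⁻¹ ^ b * (T (N + 1) + e (N + 1))) * hsign
  have hsum := (HasSum.of_nat_of_neg_add_one
    (f := fun k : ℤ => ((k : ℝ)⁻¹) ^ b * φ k) hpos hneg).tsum_eq
  have hmem := Submodule.smul_mem _ (1 / 2 : ℚ) (sub_mem hA hE)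
  rw [hsum, Rat.smul_def] at hmem
  convert hmem using 1
  push_cast
  ring

lemma Sspan_le_Vspan (w m : ℕ) : Sspan w m ≤ Vspan w m := by
  refine sup_le (sup_le (Vspan_mono (by omega) le_rfl) (Vspan_mono le_rfl (by omega))) ?_
  refine iSup_le fun w₁ => iSup_le fun w₂ => iSup_le fun m₁ => iSup_le fun m₂ => iSup_le fun _ =>
    iSup_le fun _ => iSup_le fun hw => iSup_le fun hm => Submodule.span_le.2 ?_
  rintro _ ⟨y, hy, z, hz, rfl⟩
  exact Vspan_mono hw hm (Vspan_mul_mem hy hz)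

lemma mul_mem_Sspan {w m w₁ w₂ m₁ m₂ : ℕ} {x y : ℝ} (hx : x ∈ Vspan w₁ m₁) (hy : y ∈ Vspan w₂ m₂)
    (hw₁ : 1 ≤ w₁) (hw₂ : 1 ≤ w₂) (hw : w₁ + w₂ ≤ w) (hm : m₁ + m₂ ≤ m) : x * y ∈ Sspan w m := by
  have h : x * y ∈ Submodule.span ℚ {x | ∃ y ∈ Vspan w₁ m₁, ∃ z ∈ Vspan w₂ m₂, x = y * z} :=
    Submodule.subset_span ⟨x, hx, y, hy, rfl⟩
  refine Submodule.mem_sup_right (Submodule.mem_iSup_of_mem w₁ (Submodule.mem_iSup_of_mem w₂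
    (Submodule.mem_iSup_of_mem m₁ (Submodule.mem_iSup_of_mem m₂ ?_))))
  simpa only [hw₁, hw₂, hw, hm, iSup_pos] using h

lemma Vspan_le_Sspan (w m : ℕ) (hm : 1 ≤ m) (hodd : Odd (w + m)) : Vspan w m ≤ Sspan w m := by
  refine Submodule.span_le.2 ?_
  rintro x ⟨w', m', hw', hm', hx⟩
  rcases hw'.lt_or_eq with hlt | rfl
  · exact Submodule.mem_sup_left (Submodule.mem_sup_left
      (Submodule.subset_span ⟨w', m', by omega, hm', hx⟩))
  rcases hm'.lt_or_eq with hlt | rfl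
  · exact Submodule.mem_sup_left (Submodule.mem_sup_right
      (Submodule.subset_span ⟨w', m', le_rfl, by omega, hx⟩))
  obtain ⟨a, zs, hz, rfl, hw, hm'⟩ := hx
  rcases zs with _ | ⟨⟨p, n⟩, zs⟩
  · simp at hm'; omega
  have hadm := hz ⟨p, n⟩ (by simp)
  have hmz := mzv_mem_Vspan p n hadm.1 hadm.2
  have hwz : 2 ≤ ∑ i, n i :=
    hadm.2.trans (single_le_sum (f := n) (fun _ _ => Nat.zero_le _) (mem_univ _))
  simp only [List.map_cons, List.sum_cons, MZIndex.weight, MZIndex.depth] at hw hm'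
  by_cases hrest : 1 ≤ 2 * a + (zs.map MZIndex.weight).sum
  · have hy : Real.pi ^ (2 * a) * (zs.map fun z => mzv (z.1 + 1) z.2).prod ∈
        Vspan (2 * a + (zs.map MZIndex.weight).sum) (zs.map MZIndex.depth).sum :=
      Submodule.subset_span ⟨_, _, le_rfl, le_rfl, a, zs,
        fun z h => hz z (List.mem_cons_of_mem _ h), rfl, rfl, rfl⟩
    have := mul_mem_Sspan (w := w') (m := m') hmz hy (by omega) hrest
      (by omega) (by omega)
    rw [SetLike.mem_coe, List.map_cons, List.prod_cons, mul_left_comm]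
    exact this
  · rcases zs with _ | ⟨z, zs⟩
    · obtain rfl : a = 0 := by omega
      simp only [List.map_nil, List.sum_nil, add_zero, mul_zero, zero_add] at hw hm'
      subst hw hm'
      refine Submodule.mem_sup_left (Submodule.mem_sup_right ?_)
      simpa using mzv_mem_Vspan_of_odd p n hadm.1 hadm.2 hodd
    · have hadm' := hz z (by simp)
      have : 2 ≤ z.weight :=
        hadm'.2.trans (single_le_sum (f := z.2) (fun _ _ => Nat.zero_le _) (mem_univ _))
      simp only [List.map_cons, List.sum_cons] at hrest
      omega

end ParityTheorem

/-- If `w + m` is odd then `V_{w,m} = S_{w,m}`; in particular every multiple zeta value of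
weight `w` and depth `m` lies in `S_{w,m}`. -/
theorem stmt6 (w m : ℕ) (hw : 1 ≤ w) (hm : 1 ≤ m) (hodd : Odd (w + m)) :
    Vspan w m = Sspan w m ∧
      ∀ n : Fin m → ℕ, (∀ i, 1 ≤ n i) → 2 ≤ n ⟨m - 1, by omega⟩ →
        (∑ i, n i) = w → mzv m n ∈ Sspan w m := by
  refine ⟨le_antisymm (Vspan_le_Sspan w m hm hodd) (Sspan_le_Vspan w m), ?_⟩
  intro n hn hl hsum
  obtain ⟨p, rfl⟩ : ∃ p, m = p + 1 := ⟨m - 1, by omega⟩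
  subst hsum
  exact Submodule.mem_sup_left (Submodule.mem_sup_right
    (mzv_mem_Vspan_of_odd p n hn hl hodd))
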